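/- arXiv:1902.00446 — 13 statements merged into one kernel-verified Lean document; each statement's English description precedes it below -/
import Mathlib

section
/- For every prime p there exists a (p-1)-satisfactory coloring of the positive integers; that is, there is a function c : ℤ⁺ → {1,…,p-1} such that for every positive integer a and all integers i, j with 1 ≤ i < j ≤ p-1, c(ia) ≠ c(ja). -/
/-!
Color each positive integer by its last nonzero digit in base `p`. For prime `p` this digit is
multiplicative modulo `p`, so multiplication by `a` acts on the digits `1, …, p - 1` as
multiplication by a unit modulo `p`, which is injective.
-/

section

variable {p m : ℕ}

theorem divMaxPow_of_not_dvd (h : ¬p ∣ m) : m.divMaxPow p = m := by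
  rw [Nat.divMaxPow, Nat.maxPowDvdDiv_of_not_dvd h]

theorem divMaxPow_mul (hp : p.Prime) (m n : ℕ) :
    (m * n).divMaxPow p = m.divMaxPow p * n.divMaxPow p := by
  obtain rfl | hm := eq_or_ne m 0
  · simp
  obtain rfl | hn := eq_or_ne n 0
  · simp
  have not_dvd : ¬p ∣ m.divMaxPow p * n.divMaxPow p :=
    hp.not_dvd_mul (Nat.not_dvd_divMaxPow hp.one_lt hm) (Nat.not_dvd_divMaxPow hp.one_lt hn)
  have factored : m * n =
      p ^ (padicValNat p m + padicValNat p n) * (m.divMaxPow p * n.divMaxPow p) := by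
    rw [pow_add, mul_mul_mul_comm, Nat.pow_padicValNat_mul_divMaxPow,
      Nat.pow_padicValNat_mul_divMaxPow]
  rw [factored, Nat.divMaxPow_base_pow_mul hp.ne_zero, divMaxPow_of_not_dvd not_dvd]

/-- The last nonzero digit of `m` in base `p`, which serves as the color of `m`. The reading as a
digit presupposes `1 < p` and `m ≠ 0`; the value at `m = 0` is `0`. -/
def lastNonzeroDigit (p m : ℕ) : ℕ := m.divMaxPow p % p

theorem lastNonzeroDigit_zero_right (p : ℕ) : lastNonzeroDigit p 0 = 0 := by
  simp [lastNonzeroDigit]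

theorem lastNonzeroDigit_pos (hp : 1 < p) (hm : m ≠ 0) : 0 < lastNonzeroDigit p m :=
  Nat.emod_pos_of_not_dvd (Nat.not_dvd_divMaxPow hp hm)

theorem lastNonzeroDigit_lt (hp : 0 < p) (m : ℕ) : lastNonzeroDigit p m < p :=
  Nat.mod_lt _ hp

theorem lastNonzeroDigit_of_lt (hmp : m < p) : lastNonzeroDigit p m = m := by
  obtain rfl | hm := m.eq_zero_or_pos
  · exact lastNonzeroDigit_zero_right p
  · rw [lastNonzeroDigit, divMaxPow_of_not_dvd (Nat.not_dvd_of_pos_of_lt hm hmp),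
      Nat.mod_eq_of_lt hmp]

theorem lastNonzeroDigit_mul (hp : p.Prime) (m n : ℕ) :
    lastNonzeroDigit p (m * n) = lastNonzeroDigit p m * lastNonzeroDigit p n % p := by
  rw [lastNonzeroDigit, divMaxPow_mul hp, Nat.mul_mod, ← lastNonzeroDigit, ← lastNonzeroDigit]

theorem injOn_lastNonzeroDigit_mul_right (hp : p.Prime) (hm : m ≠ 0) :
    Set.InjOn (fun i ↦ lastNonzeroDigit p (i * m)) (Set.Iio p) := by
  intro i (hi : i < p) j (hj : j < p) h
  have hcop : p.Coprime (lastNonzeroDigit p m) :=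
    Nat.coprime_of_lt_prime (lastNonzeroDigit_pos hp.one_lt hm).ne'
      (lastNonzeroDigit_lt hp.pos m) hp
  have hmul : i * lastNonzeroDigit p m ≡ j * lastNonzeroDigit p m [MOD p] := by
    simpa only [Nat.ModEq, lastNonzeroDigit_mul hp, lastNonzeroDigit_of_lt hi,
      lastNonzeroDigit_of_lt hj] using h
  exact (hmul.cancel_right_of_coprime hcop).eq_of_lt_of_lt hi hj

end

/-- For every prime `p` there exists a `(p-1)`-satisfactory coloring of the positive
integers: a function `c : ℤ⁺ → {1,…,p-1}` such that for every positive integer `a`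
and all `1 ≤ i < j ≤ p-1`, `c (i*a) ≠ c (j*a)`. -/
theorem satisfactory_coloring_of_prime (p : ℕ) (hp : p.Prime) :
    ∃ c : ℕ → ℕ,
      (∀ m : ℕ, 0 < m → c m ∈ Finset.Icc 1 (p - 1)) ∧
      (∀ a : ℕ, 0 < a → ∀ i j : ℕ, 1 ≤ i → i < j → j ≤ p - 1 →
        c (i * a) ≠ c (j * a)) := by
  refine ⟨lastNonzeroDigit p, fun m hm ↦ ?_, fun a ha i j _ hij hj hc ↦ ?_⟩
  · exact Finset.mem_Icc.2 ⟨lastNonzeroDigit_pos hp.one_lt hm.ne',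
      Nat.le_sub_one_of_lt (lastNonzeroDigit_lt hp.pos m)⟩
  · have hjp : j < p := Nat.lt_of_le_sub_one hp.pos hj
    exact hij.ne (injOn_lastNonzeroDigit_mul_right hp ha.ne' (hij.trans hjp) hjp hc)
end

section
/- Let m ≥ 1 be an integer. If there exists an (m-1)-satisfactory coloring of the positive integers, then for all integers 0 < b₁ < b₂ < ⋯ < b_m, one has max over all pairs i, j ∈ {1,…,m} of b_i / gcd(b_i, b_j) ≥ m (Graham's conjecture for m). -/
/-!
If `x / gcd x y` and `y / gcd x y` are at most `n`, then `x` and `y` are both among the multiples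
`g, 2g, …, ng` of `g = gcd x y`, so an `n`-satisfactory coloring separates them. Were all the
quotients `b i / gcd (b i) (b j)` at most `n`, the `b i` would thus have pairwise distinct colors,
and there are only `n` colors for `n + 1` numbers.
-/

/-- The coloring `c` is `n`-satisfactory on the positive integers: `a, 2a, …, na` have distinct
colors for every `a > 0`. The palette `α` is arbitrary, so a bound on the number of colors is to be
imposed separately; `c 0` is unconstrained. -/
def IsSatisfactory {α : Type*} (n : ℕ) (c : ℕ → α) : Prop :=
  ∀ a, 0 < a → ∀ i j, 1 ≤ i → i < j → j ≤ n → c (i * a) ≠ c (j * a)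

namespace IsSatisfactory

variable {α ι : Type*} {n : ℕ} {c : ℕ → α} {b : ι → ℕ}

theorem ne_of_lt (hc : IsSatisfactory n c) {x y : ℕ} (hx : 0 < x) (hxy : x < y)
    (hy : y / y.gcd x ≤ n) : c x ≠ c y := by
  have gcd_pos : 0 < y.gcd x := Nat.gcd_pos_of_pos_right y hx
  have one_le_div : 1 ≤ x / y.gcd x := Nat.div_pos (Nat.gcd_le_right y hx) gcd_pos
  have div_lt_div : x / y.gcd x < y / y.gcd x :=
    Nat.div_lt_div_of_lt_of_dvd (Nat.gcd_dvd_left y x) hxy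
  simpa only [Nat.div_mul_cancel (Nat.gcd_dvd_left y x),
    Nat.div_mul_cancel (Nat.gcd_dvd_right y x)] using
    hc (y.gcd x) gcd_pos _ _ one_le_div div_lt_div hy

theorem injective_comp (hc : IsSatisfactory n c) (hpos : ∀ i, 0 < b i)
    (hb : Function.Injective b) (hdiv : ∀ i j, b i / (b i).gcd (b j) ≤ n) :
    Function.Injective (c ∘ b) := by
  intro i j hij
  by_contra hne
  rcases (hb.ne hne).lt_or_gt with hlt | hgt
  · exact hc.ne_of_lt (hpos i) hlt (hdiv j i) hij
  · exact hc.ne_of_lt (hpos j) hgt (hdiv i j) hij.symm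

theorem exists_lt_div_gcd_of_card_lt [Fintype ι] (hc : IsSatisfactory n c) (hpos : ∀ i, 0 < b i)
    (hb : Function.Injective b) {t : Finset α} (ht : ∀ i, c (b i) ∈ t)
    (hcard : t.card < Fintype.card ι) : ∃ i j, n < b i / (b i).gcd (b j) := by
  by_contra! hdiv
  have card_le : Fintype.card ι ≤ t.card :=
    Finset.card_le_card_of_injOn (c ∘ b) (fun i _ ↦ ht i)
      (hc.injective_comp hpos hb hdiv).injOn
  exact hcard.not_ge card_le

end IsSatisfactory

/-- If there exists an `(m-1)`-satisfactory coloring of the positive integers, then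
Graham's conjecture holds for `m`: for all integers `0 < b₁ < ⋯ < b_m`, some pair
`i, j` satisfies `b i / gcd (b i) (b j) ≥ m`. -/
theorem graham_of_satisfactory_coloring (m : ℕ) (hm : 1 ≤ m)
    (h : ∃ c : ℕ → ℕ,
      (∀ x : ℕ, 0 < x → c x ∈ Finset.Icc 1 (m - 1)) ∧
      (∀ a : ℕ, 0 < a → ∀ i j : ℕ, 1 ≤ i → i < j → j ≤ m - 1 →
        c (i * a) ≠ c (j * a))) :
    ∀ b : Fin m → ℕ, (∀ i, 0 < b i) → StrictMono b →
      ∃ i j : Fin m, m ≤ b i / Nat.gcd (b i) (b j) := by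
  obtain ⟨c, hcolors, hc : IsSatisfactory (m - 1) c⟩ := h
  intro b hpos hb
  have card_colors_lt : (Finset.Icc 1 (m - 1)).card < Fintype.card (Fin m) := by
    simp only [Nat.card_Icc, Fintype.card_fin]
    omega
  obtain ⟨i, j, hij⟩ := hc.exists_lt_div_gcd_of_card_lt hpos hb.injective
    (fun i ↦ hcolors (b i) (hpos i)) card_colors_lt
  exact ⟨i, j, Nat.le_of_pred_lt hij⟩
end

section
/- Let n ≥ 1 be an integer. If there exists an n-satisfactory coloring of the positive integers, then for every finite nonempty set A of positive integers with |A| odd, the symmetric difference △_{i=1}^{n} (i·A) of the dilates A, 2·A, …, n·A has at least n elements. -/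
/-!
Every colour `k` occurs in the symmetric difference: modulo 2, the number of its elements of
colour `k` is the number of pairs `(i, a)` with `i * a` of colour `k`. For each `a ∈ A` the `n`
numbers `a, 2a, …, na` carry `n` distinct colours, so exactly one of them has colour `k`, and the
number of pairs is `#A`, which is odd.
-/

open Finset

section

variable {ι α β κ : Type*} [DecidableEq β]

/-- The symmetric difference of the finite family `S i`, `i ∈ I`: the elements that belong to an odd
number of its members. -/
def familySymmDiff (I : Finset ι) (S : ι → Finset β) : Finset β :=
  {x ∈ I.biUnion S | Odd #{i ∈ I | x ∈ S i}}

theorem sum_card_eq_sum_biUnion_card_filter_mem (I : Finset ι) (S : ι → Finset β) :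
    ∑ i ∈ I, #(S i) = ∑ x ∈ I.biUnion S, #{i ∈ I | x ∈ S i} := by
  calc ∑ i ∈ I, #(S i)
      = ∑ i ∈ I, #{x ∈ I.biUnion S | x ∈ S i} := sum_congr rfl fun i hi ↦ by
        rw [filter_mem_eq_inter, inter_eq_right.2 (subset_biUnion_of_mem S hi)]
    _ = ∑ x ∈ I.biUnion S, #{i ∈ I | x ∈ S i} :=
        sum_card_bipartiteAbove_eq_sum_card_bipartiteBelow fun i x ↦ x ∈ S i

theorem odd_card_familySymmDiff (I : Finset ι) (S : ι → Finset β) :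
    Odd #(familySymmDiff I S) ↔ Odd (∑ i ∈ I, #(S i)) := by
  rw [sum_card_eq_sum_biUnion_card_filter_mem, odd_sum_iff_odd_card_odd, familySymmDiff]

theorem filter_familySymmDiff (p : β → Prop) [DecidablePred p] (I : Finset ι)
    (S : ι → Finset β) :
    {x ∈ familySymmDiff I S | p x} = familySymmDiff I fun i ↦ {x ∈ S i | p x} := by
  ext x
  by_cases hx : p x <;> simp [familySymmDiff, hx]

theorem sum_card_filter_image_of_existsUnique (p : β → Prop) [DecidablePred p] {I : Finset ι}
    {A : Finset α} {f : ι → α → β} (hf : ∀ i ∈ I, Set.InjOn (f i) A)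
    (hp : ∀ a ∈ A, ∃! i, i ∈ I ∧ p (f i a)) :
    ∑ i ∈ I, #{x ∈ A.image (f i) | p x} = #A := by
  calc ∑ i ∈ I, #{x ∈ A.image (f i) | p x}
      = ∑ i ∈ I, #{a ∈ A | p (f i a)} := sum_congr rfl fun i hi ↦ by
        rw [filter_image, card_image_of_injOn ((hf i hi).mono (filter_subset _ _))]
    _ = ∑ a ∈ A, #{i ∈ I | p (f i a)} :=
        sum_card_bipartiteAbove_eq_sum_card_bipartiteBelow fun i a ↦ p (f i a)
    _ = ∑ a ∈ A, 1 := sum_congr rfl fun a ha ↦ by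
        simpa only [card_eq_one, singleton_iff_unique_mem, mem_filter] using hp a ha
    _ = #A := (card_eq_sum_ones A).symm

theorem exists_mem_familySymmDiff_image {p : β → Prop} {I : Finset ι} {A : Finset α}
    {f : ι → α → β} (hf : ∀ i ∈ I, Set.InjOn (f i) A)
    (hp : ∀ a ∈ A, ∃! i, i ∈ I ∧ p (f i a)) (hA : Odd #A) :
    ∃ x ∈ familySymmDiff I fun i ↦ A.image (f i), p x := by
  classical
  have hodd : Odd #{x ∈ familySymmDiff I fun i ↦ A.image (f i) | p x} := by
    rwa [filter_familySymmDiff, odd_card_familySymmDiff,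
      sum_card_filter_image_of_existsUnique p hf hp]
  simpa only [Finset.Nonempty, mem_filter] using card_pos.1 hodd.pos

theorem pilz_odd_of_satisfactory_coloring_general {I : Finset ι} {A : Finset α} {f : ι → α → β}
    {c : β → κ} {K : Finset κ} (hf : ∀ i ∈ I, Set.InjOn (f i) A)
    (hc : ∀ a ∈ A, ∀ k ∈ K, ∃! i, i ∈ I ∧ c (f i a) = k) (hA : Odd #A) :
    #K ≤ #(familySymmDiff I fun i ↦ A.image (f i)) :=
  card_le_card_of_surjOn c fun k hk ↦
    exists_mem_familySymmDiff_image hf (fun a ha ↦ hc a ha k hk) hA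

end

/-- An `n`-satisfactory coloring of the positive integers; the value of `c` at `0` is irrelevant. -/
structure IsSatisfactoryColoring (n : ℕ) (c : ℕ → ℕ) : Prop where
  color_mem : ∀ x, 0 < x → c x ∈ Icc 1 n
  color_mul_ne : ∀ a, 0 < a → ∀ i j, 1 ≤ i → i < j → j ≤ n → c (i * a) ≠ c (j * a)

namespace IsSatisfactoryColoring

variable {n a : ℕ} {c : ℕ → ℕ}

theorem injOn_color_mul (hc : IsSatisfactoryColoring n c) (ha : 0 < a) :
    Set.InjOn (fun i ↦ c (i * a)) (Icc 1 n) := by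
  intro i hi j hj hij
  rw [mem_coe, mem_Icc] at hi hj
  by_contra hne
  rcases lt_or_gt_of_ne hne with hlt | hlt
  · exact hc.color_mul_ne a ha i j hi.1 hlt hj.2 hij
  · exact hc.color_mul_ne a ha j i hj.1 hlt hi.2 hij.symm

theorem existsUnique_color_mul_eq (hc : IsSatisfactoryColoring n c) (ha : 0 < a) {k : ℕ}
    (hk : k ∈ Icc 1 n) : ∃! i, i ∈ Icc 1 n ∧ c (i * a) = k := by
  have hmaps : Set.MapsTo (fun i ↦ c (i * a)) (Icc 1 n) (Icc 1 n) := fun i hi ↦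
    hc.color_mem _ (Nat.mul_pos (mem_Icc.1 hi).1 ha)
  have hinj := hc.injOn_color_mul ha
  obtain ⟨i, hi, hik⟩ := surjOn_of_injOn_of_card_le _ hmaps hinj le_rfl hk
  exact ⟨i, ⟨hi, hik⟩, fun j hj ↦ hinj hj.1 hi (hj.2.trans hik.symm)⟩

end IsSatisfactoryColoring

/-- If there is an `n`-satisfactory coloring of the positive integers, then for every
finite nonempty set `A` of positive integers of odd size, the symmetric difference of
the dilates `A, 2·A, …, n·A` (the set of elements belonging to an odd number of the
dilates) has at least `n` elements. -/
theorem pilz_odd_of_satisfactory_coloring (n : ℕ) (hn : 1 ≤ n)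
    (h : ∃ c : ℕ → ℕ,
      (∀ x : ℕ, 0 < x → c x ∈ Finset.Icc 1 n) ∧
      (∀ a : ℕ, 0 < a → ∀ i j : ℕ, 1 ≤ i → i < j → j ≤ n →
        c (i * a) ≠ c (j * a))) :
    ∀ A : Finset ℕ, A.Nonempty → (∀ a ∈ A, 0 < a) → Odd A.card →
      n ≤ ((((Finset.Icc 1 n).biUnion (fun i => A.image (fun x => i * x))).filter
            (fun x => Odd (((Finset.Icc 1 n).filter
              (fun i => x ∈ A.image (fun y => i * y))).card))).card) := by
  obtain ⟨c, hmem, hne⟩ := h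
  intro A _ hpos hodd
  have hinj : ∀ i ∈ Icc 1 n, Set.InjOn (i * ·) (A : Set ℕ) := fun i hi ↦
    (mul_right_injective₀ (Nat.one_le_iff_ne_zero.1 (mem_Icc.1 hi).1)).injOn
  have hunique : ∀ a ∈ A, ∀ k ∈ Icc 1 n, ∃! i, i ∈ Icc 1 n ∧ c (i * a) = k := fun a ha _ hk ↦
    IsSatisfactoryColoring.existsUnique_color_mul_eq ⟨hmem, hne⟩ (hpos a ha) hk
  simpa only [familySymmDiff, Nat.card_Icc, Nat.add_sub_cancel] using
    pilz_odd_of_satisfactory_coloring_general hinj hunique hodd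
end

section
/- Let n > 1 be an integer. If there exists an n-satisfactory coloring of the n-core K_n, then the set of n-satisfactory colorings of the positive integers that satisfy the normalization c(i) = i for every i ∈ {1,…,n} has the cardinality of the continuum, 2^{ℵ₀}. -/
/-- The `n`-core: the set of `n`-smooth positive integers. -/
def Kcore (n : ℕ) : Set ℕ := {m : ℕ | 0 < m ∧ ∀ p : ℕ, p.Prime → p ∣ m → p ≤ n}

/-!
Every positive integer is uniquely `s * r` with `s` in the `n`-core and `r` free of primes `≤ n`,
and multiplication by `i ≤ n` changes only `s`. So a satisfactory coloring `c` of the core gives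
satisfactory colorings `s * r ↦ π r (c s)` of the positive integers, where the permutations `π r`
of the colors can be chosen freely and independently. Choosing `π 1` to be the inverse of
`i ↦ c i` normalizes the coloring; composing `π p` with the transposition of the colors `1` and `2`
for an arbitrary set of primes `p > n` gives `2 ^ ℵ₀` different colorings.
-/

open Set Cardinal

section PrimePart

variable (P : ℕ → Prop) [DecidablePred P]

/-- The largest divisor of `m ≠ 0` all of whose prime factors satisfy `P`. Both the `n`-smooth and
the `n`-rough part of an integer are instances of it. At `m = 0` the value is `1`. -/
def primePart (m : ℕ) : ℕ := (m.primeFactorsList.filter P).prod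

lemma primePart_mul {a b : ℕ} (ha : a ≠ 0) (hb : b ≠ 0) :
    primePart P (a * b) = primePart P a * primePart P b := by
  simp only [primePart, ((Nat.perm_primeFactorsList_mul ha hb).filter _).prod_eq,
    List.filter_append, List.prod_append]

lemma primePart_pos (m : ℕ) : 0 < primePart P m :=
  List.prod_pos fun _ hp => Nat.pos_of_mem_primeFactorsList (List.mem_of_mem_filter hp)

variable {P}

lemma of_prime_dvd_primePart {p m : ℕ} (hp : p.Prime) (hpm : p ∣ primePart P m) : P p := by
  obtain ⟨q, hq, hpq⟩ := (Prime.dvd_prod_iff hp.prime).1 hpm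
  obtain ⟨hqm, hPq⟩ := List.mem_filter.1 hq
  rw [(Nat.prime_dvd_prime_iff_eq hp (Nat.prime_of_mem_primeFactorsList hqm)).1 hpq]
  exact of_decide_eq_true hPq

lemma primePart_eq_self {m : ℕ} (hm : m ≠ 0) (h : ∀ p, p.Prime → p ∣ m → P p) :
    primePart P m = m := by
  have hfilter : m.primeFactorsList.filter P = m.primeFactorsList :=
    List.filter_eq_self.2 fun p hp => decide_eq_true <|
      h p (Nat.prime_of_mem_primeFactorsList hp) (Nat.dvd_of_mem_primeFactorsList hp)
  rw [primePart, hfilter, Nat.prod_primeFactorsList hm]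

lemma primePart_eq_one {m : ℕ} (h : ∀ p, p.Prime → p ∣ m → ¬ P p) : primePart P m = 1 := by
  have hfilter : m.primeFactorsList.filter P = [] :=
    List.filter_eq_nil_iff.2 fun p hp => by
      simpa using h p (Nat.prime_of_mem_primeFactorsList hp) (Nat.dvd_of_mem_primeFactorsList hp)
  rw [primePart, hfilter, List.prod_nil]

end PrimePart

/-- The `n`-smooth part of `m`: its largest divisor in the `n`-core when `m ≠ 0`. -/
def smoothPart (n m : ℕ) : ℕ := primePart (· ≤ n) m

/-- The `n`-rough part of `m`: its largest divisor without prime factors `≤ n` when `m ≠ 0`. -/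
def roughPart (n m : ℕ) : ℕ := primePart (n < ·) m

section SmoothRough

variable {n i a p : ℕ}

lemma smoothPart_mem_Kcore (n m : ℕ) : smoothPart n m ∈ Kcore n :=
  ⟨primePart_pos _ m, fun _ => of_prime_dvd_primePart⟩

lemma Icc_subset_Kcore (n : ℕ) : Icc 1 n ⊆ Kcore n :=
  fun _ hi => ⟨hi.1, fun _ _ hpi => (Nat.le_of_dvd hi.1 hpi).trans hi.2⟩

lemma smoothPart_of_mem_Kcore (ha : a ∈ Kcore n) : smoothPart n a = a :=
  primePart_eq_self ha.1.ne' ha.2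

lemma roughPart_of_mem_Kcore (ha : a ∈ Kcore n) : roughPart n a = 1 :=
  primePart_eq_one fun p hp hpa => (ha.2 p hp hpa).not_gt

lemma smoothPart_mul_of_mem_Kcore (hi : i ∈ Kcore n) (ha : 0 < a) :
    smoothPart n (i * a) = i * smoothPart n a :=
  (primePart_mul _ hi.1.ne' ha.ne').trans (congrArg (· * _) (smoothPart_of_mem_Kcore hi))

lemma roughPart_mul_of_mem_Kcore (hi : i ∈ Kcore n) (ha : 0 < a) :
    roughPart n (i * a) = roughPart n a :=
  (primePart_mul _ hi.1.ne' ha.ne').trans <|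
    (congrArg (· * _) (roughPart_of_mem_Kcore hi)).trans (one_mul _)

lemma smoothPart_of_prime (hp : p.Prime) (hnp : n < p) : smoothPart n p = 1 :=
  primePart_eq_one fun _ hq hqp => by
    rwa [(Nat.prime_dvd_prime_iff_eq hq hp).1 hqp, not_le]

lemma roughPart_of_prime (hp : p.Prime) (hnp : n < p) : roughPart n p = p :=
  primePart_eq_self hp.ne_zero fun _ hq hqp => by
    rwa [(Nat.prime_dvd_prime_iff_eq hq hp).1 hqp]

end SmoothRough

/-- `c` is an `n`-satisfactory coloring of `S`: it takes values in `{1, …, n}` on `S`, and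
`a, 2 * a, …, n * a` have distinct colors for all `a ∈ S`. Colorings are total functions, with
arbitrary values outside `S`. -/
structure IsSatisfactoryOn (n : ℕ) (S : Set ℕ) (c : ℕ → ℕ) : Prop where
  mapsTo : MapsTo c S (Icc 1 n)
  injOn : ∀ a ∈ S, InjOn (fun i => c (i * a)) (Icc 1 n)

lemma isSatisfactoryOn_iff {n : ℕ} {S : Set ℕ} {c : ℕ → ℕ} :
    IsSatisfactoryOn n S c ↔
      (∀ m ∈ S, c m ∈ Finset.Icc 1 n) ∧
      ∀ a ∈ S, ∀ i j : ℕ, 1 ≤ i → i < j → j ≤ n → c (i * a) ≠ c (j * a) := by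
  simp only [Finset.mem_Icc]
  refine ⟨fun hc => ⟨hc.mapsTo, fun a ha i j hi hij hj hcol => hij.ne ?_⟩,
    fun ⟨hmaps, hne⟩ => ⟨hmaps, fun a ha i hi j hj hcol => ?_⟩⟩
  · exact hc.injOn a ha ⟨hi, hij.le.trans hj⟩ ⟨hi.trans hij.le, hj⟩ hcol
  · rcases lt_trichotomy i j with hij | hij | hji
    · exact absurd hcol (hne a ha i j hi.1 hij hj.2)
    · exact hij
    · exact absurd hcol.symm (hne a ha j i hj.1 hji hi.2)

lemma IsSatisfactoryOn.bijOn {n : ℕ} {S : Set ℕ} {c : ℕ → ℕ} (hc : IsSatisfactoryOn n S c)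
    (hS : Icc 1 n ⊆ S) : BijOn c (Icc 1 n) (Icc 1 n) := by
  have hmaps : MapsTo c (Icc 1 n) (Icc 1 n) := hc.mapsTo.mono_left hS
  refine ((finite_Icc 1 n).injOn_iff_bijOn_of_mapsTo hmaps).1 fun i hi j hj hij => ?_
  exact hc.injOn 1 (hS ⟨le_rfl, hi.1.trans hi.2⟩) hi hj (by simpa only [mul_one] using hij)

/-- The coloring `s * r ↦ π r (c s)`, for `s` in the `n`-core and `r` free of primes `≤ n`. -/
def recolor (n : ℕ) (π : ℕ → ℕ → ℕ) (c : ℕ → ℕ) (m : ℕ) : ℕ :=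
  π (roughPart n m) (c (smoothPart n m))

lemma isSatisfactoryOn_recolor {n : ℕ} {π : ℕ → ℕ → ℕ} {c : ℕ → ℕ}
    (hc : IsSatisfactoryOn n (Kcore n) c) (hπ : ∀ r, BijOn (π r) (Icc 1 n) (Icc 1 n)) :
    IsSatisfactoryOn n {m | 0 < m} (recolor n π c) where
  mapsTo m _ := (hπ _).mapsTo (hc.mapsTo (smoothPart_mem_Kcore n m))
  injOn a ha i hi j hj hij := by
    have hcolor (m : ℕ) : c (smoothPart n m) ∈ Icc 1 n := hc.mapsTo (smoothPart_mem_Kcore n m)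
    have hiK := Icc_subset_Kcore n hi
    have hjK := Icc_subset_Kcore n hj
    simp only [recolor, roughPart_mul_of_mem_Kcore hiK ha, roughPart_mul_of_mem_Kcore hjK ha] at hij
    have hcij := (hπ _).injOn (hcolor _) (hcolor _) hij
    rw [smoothPart_mul_of_mem_Kcore hiK ha, smoothPart_mul_of_mem_Kcore hjK ha] at hcij
    exact hc.injOn _ (smoothPart_mem_Kcore n a) hi hj hcij

/-- The set of primes above `n`. -/
def largePrimes (n : ℕ) : Set ℕ := {p | p.Prime ∧ n < p}

lemma mk_powerset_largePrimes (n : ℕ) : #(𝒫 (largePrimes n)) = 𝔠 := by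
  have hinf : (largePrimes n).Infinite := infinite_of_forall_exists_gt fun a => by
    obtain ⟨p, hle, hp⟩ := Nat.exists_infinite_primes (max a n + 1)
    exact ⟨p, ⟨hp, by omega⟩, by omega⟩
  have : Infinite (largePrimes n) := hinf.to_subtype
  rw [mk_powerset, mk_eq_aleph0, two_power_aleph0]

/-- The `n`-satisfactory colorings of the positive integers with `c i = i` for
`i ∈ {1, …, n}`. -/
def normalizedColorings (n : ℕ) : Set (ℕ → ℕ) :=
  {c | IsSatisfactoryOn n {m | 0 < m} c ∧ EqOn c id (Icc 1 n)}

open Classical in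
/-- The permutation of the colors attached to the rough part `r`: the inverse of `c` on
`{1, …, n}`, followed by the transposition of `1` and `2` if `r ∈ A`. -/
noncomputable def normalizeSwap (n : ℕ) (c : ℕ → ℕ) (A : Set ℕ) (r : ℕ) : ℕ → ℕ :=
  (if r ∈ A then Equiv.swap 1 2 else id) ∘ Function.invFunOn c (Icc 1 n)

section NormalizeSwap

variable {n : ℕ} {c : ℕ → ℕ} {A : Set ℕ}

lemma bijOn_normalizeSwap (hn : 1 < n) (hc : BijOn c (Icc 1 n) (Icc 1 n)) (A : Set ℕ) (r : ℕ) :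
    BijOn (normalizeSwap n c A r) (Icc 1 n) (Icc 1 n) := by
  refine BijOn.comp ?_ (hc.symm hc.invOn_invFunOn.symm)
  split_ifs
  · exact Equiv.swap_bijOn_self (by simp only [mem_Icc]; omega)
  · exact bijOn_id _

lemma recolor_normalizeSwap_of_mem_Icc (hc : InjOn c (Icc 1 n)) (hone : 1 ∉ A) {i : ℕ}
    (hi : i ∈ Icc 1 n) : recolor n (normalizeSwap n c A) c i = i := by
  have hiK := Icc_subset_Kcore n hi
  rw [recolor, roughPart_of_mem_Kcore hiK, smoothPart_of_mem_Kcore hiK, normalizeSwap, if_neg hone]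
  exact hc.leftInvOn_invFunOn hi

open Classical in
lemma recolor_normalizeSwap_of_mem_largePrimes (hn : 1 ≤ n) (hc : InjOn c (Icc 1 n)) (A : Set ℕ)
    {p : ℕ} (hp : p ∈ largePrimes n) :
    recolor n (normalizeSwap n c A) c p = if p ∈ A then 2 else 1 := by
  have hone : Function.invFunOn c (Icc 1 n) (c 1) = 1 := hc.leftInvOn_invFunOn ⟨le_rfl, hn⟩
  simp only [recolor, normalizeSwap, roughPart_of_prime hp.1 hp.2, smoothPart_of_prime hp.1 hp.2,
    Function.comp_apply, hone]
  split_ifs <;> simp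

lemma injOn_recolor_normalizeSwap (hn : 1 ≤ n) (hc : InjOn c (Icc 1 n)) :
    InjOn (fun A => recolor n (normalizeSwap n c A) c) (𝒫 (largePrimes n)) := by
  have hmem (A : Set ℕ) (hA : A ⊆ largePrimes n) (p : ℕ) :
      p ∈ A ↔ p ∈ largePrimes n ∧ recolor n (normalizeSwap n c A) c p = 2 := by
    refine ⟨fun hp => ⟨hA hp, ?_⟩, fun ⟨hp, hcol⟩ => ?_⟩
    · rw [recolor_normalizeSwap_of_mem_largePrimes hn hc A (hA hp), if_pos hp]
    · rw [recolor_normalizeSwap_of_mem_largePrimes hn hc A hp] at hcol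
      by_contra hpA
      simp [hpA] at hcol
  intro A hA B hB hAB
  dsimp only at hAB
  ext p
  rw [hmem A hA, hmem B hB, hAB]

end NormalizeSwap

lemma continuum_le_mk_normalizedColorings {n : ℕ} (hn : 1 < n) {c : ℕ → ℕ}
    (hc : IsSatisfactoryOn n (Kcore n) c) : 𝔠 ≤ #(normalizedColorings n) := by
  have hbij := hc.bijOn (Icc_subset_Kcore n)
  let F : Set ℕ → ℕ → ℕ := fun A => recolor n (normalizeSwap n c A) c
  have hF : F '' 𝒫 (largePrimes n) ⊆ normalizedColorings n := by
    rintro _ ⟨A, hA, rfl⟩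
    have hone : 1 ∉ A := fun h => Nat.not_prime_one (hA h).1
    exact ⟨isSatisfactoryOn_recolor hc (bijOn_normalizeSwap hn hbij A),
      fun _ hi => recolor_normalizeSwap_of_mem_Icc hbij.injOn hone hi⟩
  calc 𝔠 = #(𝒫 (largePrimes n)) := (mk_powerset_largePrimes n).symm
    _ = #(F '' 𝒫 (largePrimes n)) :=
      (mk_image_eq_of_injOn _ _ (injOn_recolor_normalizeSwap hn.le hbij.injOn)).symm
    _ ≤ #(normalizedColorings n) := mk_le_mk_of_subset hF

/-- If there is an `n`-satisfactory coloring of the `n`-core `K_n` (with `n > 1`),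
then the set of `n`-satisfactory colorings of the positive integers normalized by
`c i = i` for `i ∈ {1,…,n}` has the cardinality of the continuum. -/
theorem continuum_many_satisfactory_colorings (n : ℕ) (hn : 1 < n)
    (h : ∃ c : ℕ → ℕ,
      (∀ m ∈ Kcore n, c m ∈ Finset.Icc 1 n) ∧
      (∀ a ∈ Kcore n, ∀ i j : ℕ, 1 ≤ i → i < j → j ≤ n →
        c (i * a) ≠ c (j * a))) :
    Cardinal.mk {c : ℕ → ℕ //
      (∀ m : ℕ, 0 < m → c m ∈ Finset.Icc 1 n) ∧
      (∀ i ∈ Finset.Icc 1 n, c i = i) ∧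
      (∀ a : ℕ, 0 < a → ∀ i j : ℕ, 1 ≤ i → i < j → j ≤ n →
        c (i * a) ≠ c (j * a))} = Cardinal.continuum := by
  obtain ⟨c, hc⟩ := h
  refine le_antisymm ((mk_subtype_le _).trans_eq (by simp)) ?_
  refine (continuum_le_mk_normalizedColorings hn (isSatisfactoryOn_iff.2 hc)).trans ?_
  refine mk_le_mk_of_subset fun d ⟨hd, hnorm⟩ => ?_
  obtain ⟨hmaps, hne⟩ := isSatisfactoryOn_iff.1 hd
  exact ⟨hmaps, fun i hi => hnorm (Finset.mem_Icc.1 hi), hne⟩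
end

section
/- For every positive integer n, there exists an n-satisfactory coloring of K_n if and only if T_n tiles all of ℤ^{π(n)}; that is, if and only if there exists a set B ⊆ ℤ^{π(n)} such that ℤ^{π(n)} = T_n + B and every point of ℤ^{π(n)} has a unique representation as a + b with a ∈ T_n, b ∈ B. -/
/-- The primes `p ≤ n`, indexing the coordinates of `ℤ^{π(n)}`. -/
def PrimesLE (n : ℕ) := {p : ℕ // p.Prime ∧ p ≤ n}

/-- The map `t : K_n → ℤ^{π(n)}` sending `m` to its vector of prime exponents. -/
def expVec (n m : ℕ) : PrimesLE n → ℤ := fun p => (m.factorization p.1 : ℤ)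

/-- The polyomino `T_n = t({1,…,n}) ⊆ ℤ^{π(n)}`. -/
def Tpoly (n : ℕ) : Set (PrimesLE n → ℤ) := expVec n '' (Set.Icc 1 n)

/-!
In exponent vectors, multiplication by `i` becomes translation by `t(i)`, and `K_n` becomes the
nonnegative cone of `ℤ^{π(n)}`; so an `n`-satisfactory coloring is a coloring of that cone, with
`|T_n|` colors, which is injective on every translate of `T_n`.

Translating the cone further and further down and passing to a limit along an ultrafilter, such a
coloring of the cone yields one of the whole group. On the whole group such colorings are the same
thing as tilings: every translate of `T_n` meets a given color class exactly once, so the negative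
of a color class is a set of translations of a tiling; conversely, given a tiling, color each point
by the tile element covering it.
-/

open Set Filter

/-- The coloring `c` of `P` has colors in `S`, and the points of each translate `A + x` with
`x ∈ P` have distinct colors: the additive counterpart of a satisfactory coloring. It is meant for
`A + P ⊆ P`; the values of `c` outside `P` are then arbitrary. -/
structure IsTileColoring {G κ : Type*} [Add G] (A P : Set G) (S : Set κ) (c : G → κ) : Prop where
  mapsTo : MapsTo c P S
  injOn : ∀ x ∈ P, InjOn (fun a => c (a + x)) A

namespace IsTileColoring

theorem mono {G κ : Type*} [Add G] {A P Q : Set G} {S : Set κ} {c : G → κ}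
    (hc : IsTileColoring A Q S c) (hPQ : P ⊆ Q) : IsTileColoring A P S c :=
  ⟨hc.mapsTo.mono_left hPQ, fun x hx => hc.injOn x (hPQ hx)⟩

theorem exists_univ_of_Ici_zero {G κ : Type*} [AddCommGroup G] [PartialOrder G]
    [IsOrderedAddMonoid G] [IsDirectedOrder G] {A : Set G} {S : Set κ} (hS : S.Finite)
    {c : G → κ} (hc : IsTileColoring A (Ici 0) S c) :
    ∃ c' : G → κ, IsTileColoring A univ S c' := by
  let U : Ultrafilter G := .of atTop
  have eventually_nonneg (x : G) : ∀ᶠ s in U, 0 ≤ x + s :=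
    Ultrafilter.of_le atTop
      ((tendsto_atTop_add_const_left _ x tendsto_id).eventually_ge_atTop 0)
  have exists_limit (x : G) : ∃ k ∈ S, ∀ᶠ s in U, c (x + s) = k := by
    refine (Ultrafilter.eventually_exists_mem_iff hS).1 ?_
    filter_upwards [eventually_nonneg x] with s hs
    exact ⟨_, hc.mapsTo hs, rfl⟩
  choose c' hc'S hc' using exists_limit
  refine ⟨c', fun x _ => hc'S x, fun x _ a ha b hb (hab : c' (a + x) = c' (b + x)) => ?_⟩
  obtain ⟨s, hs, hsa, hsb⟩ :=
    ((eventually_nonneg x).and ((hc' (a + x)).and (hc' (b + x)))).exists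
  refine hc.injOn (x + s) hs ha hb ?_
  simp only [← add_assoc, hsa, hsb, hab]

variable {G : Type*} [AddCommGroup G] {A B : Set G}

theorem isComplement {c : G → G} (hA : A.Finite) (hc : IsTileColoring A univ A c) {k : G}
    (hk : k ∈ A) : AddSubgroup.IsComplement A {b | c (-b) = k} := by
  refine AddSubgroup.isComplement_iff_existsUnique_neg_add_mem.2 fun x => ?_
  have bijOn : BijOn (fun a => c (a + -x)) A A :=
    (hA.injOn_iff_bijOn_of_mapsTo fun a _ => hc.mapsTo (mem_univ _)).1 (hc.injOn (-x) (mem_univ _))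
  obtain ⟨a, ha, hak⟩ := bijOn.surjOn hk
  refine ⟨⟨a, ha⟩, by simpa [add_comm] using hak, fun b hb => Subtype.ext ?_⟩
  refine bijOn.injOn b.2 ha (Eq.trans ?_ hak.symm)
  simpa [add_comm] using hb

theorem exists_of_isComplement (h : AddSubgroup.IsComplement A B) :
    ∃ c : G → G, IsTileColoring A univ A c := by
  have existsUnique := AddSubgroup.isComplement_iff_existsUnique_neg_add_mem.1 h
  have exists_color (x : G) : ∃ k ∈ A, -k + x ∈ B := by simpa using (existsUnique x).exists
  choose c hcA hcB using exists_color
  refine ⟨c, fun x _ => hcA x, fun x _ a₁ ha₁ a₂ ha₂ (hcolor : c (a₁ + x) = c (a₂ + x)) => ?_⟩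
  -- As `a₁ + x` and `a₂ + x` lie in `k + B`, the point `a₁ + a₂ + x - k` lies in `a₁ + B` and in
  -- `a₂ + B`, so the two tile elements agree.
  let k := c (a₁ + x)
  have mem_left : -a₁ + (a₁ + a₂ + x - k) ∈ B := by
    convert hcB (a₂ + x) using 1
    rw [← hcolor]
    abel
  have mem_right : -a₂ + (a₁ + a₂ + x - k) ∈ B := by
    convert hcB (a₁ + x) using 1
    abel
  exact congrArg Subtype.val
    ((existsUnique _).unique (y₁ := ⟨a₁, ha₁⟩) (y₂ := ⟨a₂, ha₂⟩) mem_left mem_right)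

theorem exists_univ_iff_exists_isComplement (hA : A.Finite) :
    (∃ c : G → G, IsTileColoring A univ A c) ↔ ∃ B, AddSubgroup.IsComplement A B :=
  ⟨fun ⟨_, hc⟩ => ⟨_, hc.isComplement hA (hc.mapsTo (mem_univ 0))⟩,
    fun ⟨_, hB⟩ => exists_of_isComplement hB⟩

end IsTileColoring

theorem isComplement_iff_setOf_add_eq_univ_and_unique {G : Type*} [AddGroup G] {A B : Set G} :
    AddSubgroup.IsComplement A B ↔
      {x | ∃ a ∈ A, ∃ b ∈ B, x = a + b} = univ ∧
        ∀ a ∈ A, ∀ b ∈ B, ∀ a' ∈ A, ∀ b' ∈ B, a + b = a' + b' → a = a' ∧ b = b' := by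
  rw [AddSubgroup.IsComplement, Function.Bijective, and_comm]
  refine and_congr ?_ ?_
  · simp only [Function.Surjective, Prod.exists, Subtype.exists, exists_prop, eq_univ_iff_forall,
      mem_ofPred_eq, eq_comm (b := _ + _)]
  · simp only [Function.Injective, Prod.forall, Subtype.forall, Prod.mk.injEq, Subtype.mk.injEq]

theorem injOn_of_forall_lt_ne {α β : Type*} [LinearOrder α] {s : Set α} {f : α → β}
    (h : ∀ i ∈ s, ∀ j ∈ s, i < j → f i ≠ f j) : InjOn f s :=
  injOn_iff_injective.2 (.of_lt_imp_ne fun i j hij => h i i.2 j j.2 hij)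

section

variable {n : ℕ}

theorem Kcore_eq_smoothNumbers (n : ℕ) : Kcore n = Nat.smoothNumbers (n + 1) := by
  ext m
  simp only [Kcore, mem_ofPred_eq, Nat.mem_smoothNumbers', Nat.lt_succ_iff]
  refine and_iff_right_of_imp fun h => Nat.pos_of_ne_zero ?_
  rintro rfl
  obtain ⟨p, hnp, hp⟩ := Nat.exists_infinite_primes (n + 1)
  exact absurd (h p hp (dvd_zero p)) (by omega)

theorem Icc_one_subset_Kcore : Icc 1 n ⊆ Kcore n := fun i hi => by
  rw [Kcore_eq_smoothNumbers]
  exact Nat.mem_smoothNumbers_of_lt hi.1 (Nat.lt_succ_of_le hi.2)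

theorem mul_mem_Kcore {a b : ℕ} (ha : a ∈ Kcore n) (hb : b ∈ Kcore n) : a * b ∈ Kcore n := by
  rw [Kcore_eq_smoothNumbers] at ha hb ⊢
  exact Nat.mul_mem_smoothNumbers ha hb

theorem expVec_mul {a b : ℕ} (ha : a ≠ 0) (hb : b ≠ 0) :
    expVec n (a * b) = expVec n a + expVec n b := by
  funext p
  simp [expVec, Nat.factorization_mul ha hb]

theorem expVec_injOn_Kcore : InjOn (expVec n) (Kcore n) := by
  intro a ha b hb hab
  refine Nat.eq_of_factorization_eq ha.1.ne' hb.1.ne' fun p => ?_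
  by_cases hp : p.Prime ∧ p ≤ n
  · exact Int.ofNat_inj.1 (congrFun hab ⟨p, hp⟩)
  · have factorization_eq_zero {m : ℕ} (hm : m ∈ Kcore n) : m.factorization p = 0 := by
      rw [Nat.factorization_eq_zero_iff]
      by_contra! h
      exact hp ⟨h.1, hm.2 p h.1 h.2.1⟩
    rw [factorization_eq_zero ha, factorization_eq_zero hb]

theorem expVec_surjOn_Kcore : SurjOn (expVec n) (Kcore n) (Ici 0) := by
  intro v hv
  let f : ℕ →₀ ℕ := .onFinset (Finset.range (n + 1))
    (fun p => if hp : p.Prime ∧ p ≤ n then (v ⟨p, hp⟩).toNat else 0)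
    (fun p hp => by grind)
  have prime_le {p : ℕ} (hp : p ∈ f.support) : p.Prime ∧ p ≤ n := by
    by_contra h
    simp [f, h] at hp
  have factorization_eq : (f.prod (· ^ ·)).factorization = f :=
    Nat.prod_pow_factorization_eq_self fun p hp => (prime_le hp).1
  have prod_ne_zero : f.prod (· ^ ·) ≠ 0 :=
    Finset.prod_ne_zero_iff.2 fun p hp => pow_ne_zero _ (prime_le hp).1.ne_zero
  refine ⟨f.prod (· ^ ·), ⟨Nat.pos_of_ne_zero prod_ne_zero, fun p hp hpf => ?_⟩,
    funext fun p => ?_⟩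
  · refine (prime_le ?_).2
    rw [← factorization_eq, Nat.support_factorization, Nat.mem_primeFactors]
    exact ⟨hp, hpf, prod_ne_zero⟩
  · have f_apply : f p.1 = (v p).toNat := dif_pos p.2
    rw [expVec, factorization_eq, f_apply, Int.toNat_of_nonneg (hv p)]

theorem expVec_bijOn_Kcore : BijOn (expVec n) (Kcore n) (Ici 0) :=
  ⟨fun _ _ _ => Int.natCast_nonneg _, expVec_injOn_Kcore, expVec_surjOn_Kcore⟩

theorem Tpoly_finite (n : ℕ) : (Tpoly n).Finite :=
  (finite_Icc 1 n).image _

theorem expVec_bijOn_Icc : BijOn (expVec n) (Icc 1 n) (Tpoly n) :=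
  (expVec_injOn_Kcore.mono Icc_one_subset_Kcore).bijOn_image

/-- An `n`-satisfactory coloring of `K_n`, extended arbitrarily to `ℕ`; the inequalities
`c (i * a) ≠ c (j * a)` are packaged as injectivity of `i ↦ c (i * a)`. -/
structure IsSatisfactory_s5 (n : ℕ) (c : ℕ → ℕ) : Prop where
  mapsTo : MapsTo c (Kcore n) (Icc 1 n)
  injOn : ∀ a ∈ Kcore n, InjOn (fun i => c (i * a)) (Icc 1 n)

theorem isSatisfactory_iff_forall_lt_ne {c : ℕ → ℕ} :
    IsSatisfactory_s5 n c ↔ (∀ m ∈ Kcore n, c m ∈ Finset.Icc 1 n) ∧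
      ∀ a ∈ Kcore n, ∀ i j : ℕ, 1 ≤ i → i < j → j ≤ n → c (i * a) ≠ c (j * a) := by
  constructor
  · refine fun hc => ⟨fun m hm => Finset.mem_Icc.2 (hc.mapsTo hm), fun a ha i j hi hij hj => ?_⟩
    exact (hc.injOn a ha).ne ⟨hi, hij.le.trans hj⟩ ⟨hi.trans hij.le, hj⟩ hij.ne
  · rintro ⟨hmem, hne⟩
    refine ⟨fun m hm => Finset.mem_Icc.1 (hmem m hm), fun a ha => injOn_of_forall_lt_ne ?_⟩
    exact fun i hi j hj hij => hne a ha i j hi.1 hij hj.2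

theorem IsSatisfactory_s5.isTileColoring {c : ℕ → ℕ} (hc : IsSatisfactory_s5 n c) :
    IsTileColoring (Tpoly n) (Ici 0) (Tpoly n)
      (expVec n ∘ c ∘ Function.invFunOn (expVec n) (Kcore n)) := by
  have inv := expVec_bijOn_Kcore.invOn_invFunOn (f := expVec n) (s := Kcore n)
  have inv_mapsTo := (expVec_surjOn_Kcore (n := n)).mapsTo_invFunOn
  set num := Function.invFunOn (expVec n) (Kcore n)
  refine ⟨expVec_bijOn_Icc.mapsTo.comp (hc.mapsTo.comp inv_mapsTo), fun x hx => ?_⟩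
  have hnum : num x ∈ Kcore n := inv_mapsTo hx
  have num_add {i : ℕ} (hi : i ∈ Icc 1 n) : num (expVec n i + x) = i * num x := by
    have hiK := Icc_one_subset_Kcore hi
    rw [← inv.1 (mul_mem_Kcore hiK hnum), expVec_mul hiK.1.ne' hnum.1.ne', inv.2 hx]
  rintro _ ⟨i, hi, rfl⟩ _ ⟨j, hj, rfl⟩ hij
  have color_mem {i : ℕ} (hi : i ∈ Icc 1 n) : c (i * num x) ∈ Icc 1 n :=
    hc.mapsTo (mul_mem_Kcore (Icc_one_subset_Kcore hi) hnum)
  simp only [Function.comp_apply, num_add hi, num_add hj] at hij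
  rw [hc.injOn _ hnum hi hj (expVec_bijOn_Icc.injOn (color_mem hi) (color_mem hj) hij)]

theorem IsTileColoring.isSatisfactory {c : (PrimesLE n → ℤ) → PrimesLE n → ℤ}
    (hc : IsTileColoring (Tpoly n) (Ici 0) (Tpoly n) c) :
    IsSatisfactory_s5 n (Function.invFunOn (expVec n) (Icc 1 n) ∘ c ∘ expVec n) := by
  have inv_bijOn : BijOn (Function.invFunOn (expVec n) (Icc 1 n)) (Tpoly n) (Icc 1 n) :=
    (bijOn_comm expVec_bijOn_Icc.invOn_invFunOn).2 expVec_bijOn_Icc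
  have color_mem : MapsTo (c ∘ expVec n) (Kcore n) (Tpoly n) :=
    hc.mapsTo.comp expVec_bijOn_Kcore.mapsTo
  refine ⟨inv_bijOn.mapsTo.comp color_mem, fun a ha i hi j hj hij => ?_⟩
  have hiK := Icc_one_subset_Kcore hi
  have hjK := Icc_one_subset_Kcore hj
  have color_eq : c (expVec n (i * a)) = c (expVec n (j * a)) :=
    inv_bijOn.injOn (color_mem (mul_mem_Kcore hiK ha)) (color_mem (mul_mem_Kcore hjK ha)) hij
  rw [expVec_mul hiK.1.ne' ha.1.ne', expVec_mul hjK.1.ne' ha.1.ne'] at color_eq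
  exact expVec_bijOn_Icc.injOn hi hj (hc.injOn _ (expVec_bijOn_Kcore.mapsTo ha)
    (mem_image_of_mem _ hi) (mem_image_of_mem _ hj) color_eq)

theorem exists_isSatisfactory_iff_exists_isTileColoring :
    (∃ c, IsSatisfactory_s5 n c) ↔ ∃ c, IsTileColoring (Tpoly n) univ (Tpoly n) c :=
  ⟨fun ⟨_, hc⟩ => hc.isTileColoring.exists_univ_of_Ici_zero (Tpoly_finite n),
    fun ⟨_, hc⟩ => ⟨_, (hc.mono (subset_univ _)).isSatisfactory⟩⟩

end

/-- There is an `n`-satisfactory coloring of `K_n` iff `T_n` tiles all of `ℤ^{π(n)}`: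
there is `B ⊆ ℤ^{π(n)}` with `ℤ^{π(n)} = T_n + B` and every point having a unique
representation `a + b` with `a ∈ T_n`, `b ∈ B`. -/
theorem satisfactory_coloring_iff_tiling_of_Z (n : ℕ) (hn : 0 < n) :
    (∃ c : ℕ → ℕ,
      (∀ m ∈ Kcore n, c m ∈ Finset.Icc 1 n) ∧
      (∀ a ∈ Kcore n, ∀ i j : ℕ, 1 ≤ i → i < j → j ≤ n →
        c (i * a) ≠ c (j * a))) ↔
    (∃ B : Set (PrimesLE n → ℤ),
      ({x | ∃ a ∈ Tpoly n, ∃ b ∈ B, x = a + b} = Set.univ) ∧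
      (∀ a ∈ Tpoly n, ∀ b ∈ B, ∀ a' ∈ Tpoly n, ∀ b' ∈ B,
        a + b = a' + b' → a = a' ∧ b = b')) := by
  simp only [← isSatisfactory_iff_forall_lt_ne, ← isComplement_iff_setOf_add_eq_univ_and_unique]
  rw [exists_isSatisfactory_iff_exists_isTileColoring,
    IsTileColoring.exists_univ_iff_exists_isComplement (Tpoly_finite n)]
end

section
/- Let n be a positive integer such that p = 3n + 1 is prime. Then p is not a strong representative of order n: there exist integers i, j with 1 ≤ i < j ≤ n and i³ ≡ j³ (mod p). In particular, if n > 2 then there exists an integer i with 2 < i ≤ n such that i³ ≡ 1 (mod p) or i³ ≡ 8 (mod p). -/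
/-!
Let `z` and `z ^ 2` be the primitive cube roots of unity modulo `p`, viewed as residues in `[0, p)`
and named so that `z < z ^ 2`. From `z ^ 2 + z + 1 = 0` these residues add up to `p - 1`. Hence
either `z < p / 3`, or `z` and `z ^ 2` are both so close to `p / 2` that the residue
`2 * z ^ 2 - p` of `2 * z ^ 2` is less than `p / 3`. The cubes of these residues are `1` and `8`,
and unless `p = 7` neither residue is `0`, `1` or `2`.
-/

section CubeRoots

variable {R : Type*} [CommRing R] {z : R}

theorem two_lt_of_natCast_eq_isPrimitiveRoot_three (hz : IsPrimitiveRoot z 3)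
    (h7 : (7 : R) ≠ 0) {i : ℕ} (hi : (i : R) = z) : 2 < i := by
  have : Nontrivial R := nontrivial_of_ne 7 0 h7
  by_contra! hi2
  interval_cases i
  · exact hz.ne_zero (by norm_num) (by simpa using hi.symm)
  · exact hz.ne_one (by norm_num) (by simpa using hi.symm)
  · have cube : (2 : R) ^ 3 = 1 := by simpa [← hi] using hz.pow_eq_one
    exact h7 (by linear_combination cube)

variable [IsDomain R]

theorem sq_add_self_add_one_eq_zero_of_isPrimitiveRoot_three (hz : IsPrimitiveRoot z 3) :
    z ^ 2 + z + 1 = 0 := by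
  have geom_sum : ∑ k ∈ Finset.range 3, z ^ k = 0 := hz.geom_sum_eq_zero (by norm_num)
  simp only [Finset.sum_range_succ, Finset.sum_range_zero] at geom_sum
  linear_combination geom_sum

theorem two_lt_of_natCast_eq_two_mul_isPrimitiveRoot_three (hz : IsPrimitiveRoot z 3)
    (h2 : (2 : R) ≠ 0) (h7 : (7 : R) ≠ 0) {i : ℕ} (hi : (i : R) = 2 * z) : 2 < i := by
  by_contra! hi2
  interval_cases i
  · exact mul_ne_zero h2 (hz.ne_zero (by norm_num)) (by simpa using hi.symm)
  · have one_eq : (1 : R) = 2 * z := by simpa using hi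
    have cube : (1 : R) = 8 := by
      linear_combination (1 + 2 * z + 4 * z ^ 2) * one_eq + 8 * hz.pow_eq_one
    exact h7 (by linear_combination -cube)
  · exact hz.ne_one (by norm_num) (mul_left_cancel₀ h2 (by simpa using hi.symm))

end CubeRoots

section Residues

variable {m : ℕ} [NeZero m] {z : ZMod m}

theorem val_add_val_sq_add_one (hz : z ^ 2 + z + 1 = 0) : z.val + (z ^ 2).val + 1 = m := by
  have dvd : m ∣ z.val + (z ^ 2).val + 1 := by
    rw [← ZMod.natCast_eq_zero_iff]
    push_cast [ZMod.natCast_zmod_val]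
    linear_combination hz
  have := z.val_lt
  have := (z ^ 2).val_lt
  exact Nat.eq_of_dvd_of_lt_two_mul (by omega) dvd (by omega)

theorem exists_three_mul_lt_and_natCast_eq (hz : z ^ 2 + z + 1 = 0) (hlt : z.val < (z ^ 2).val) :
    ∃ i : ℕ, 3 * i < m ∧ ((i : ZMod m) = z ∨ (i : ZMod m) = 2 * z ^ 2) := by
  have sum_eq := val_add_val_sq_add_one hz
  by_cases hsmall : 3 * z.val < m
  · exact ⟨z.val, hsmall, .inl z.natCast_zmod_val⟩
  · obtain ⟨i, hi⟩ : ∃ i, i + m = 2 * (z ^ 2).val := ⟨2 * (z ^ 2).val - m, by omega⟩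
    refine ⟨i, by omega, .inr ?_⟩
    simpa using congrArg (Nat.cast : ℕ → ZMod m) hi

end Residues

section PrimeModulus

variable {p : ℕ} [Fact p.Prime]

theorem exists_isPrimitiveRoot_of_dvd {k : ℕ} (hk : k ∣ p - 1) :
    ∃ z : ZMod p, IsPrimitiveRoot z k := by
  have : NeZero (p - 1) := ⟨Nat.sub_ne_zero_of_lt (Fact.out : p.Prime).one_lt⟩
  have : HasEnoughRootsOfUnity (ZMod p) k := .of_dvd (ZMod p) hk
  exact HasEnoughRootsOfUnity.exists_primitiveRoot (ZMod p) k

theorem exists_isPrimitiveRoot_three_val_lt_val_sq (hp : p % 3 = 1) :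
    ∃ z : ZMod p, IsPrimitiveRoot z 3 ∧ z.val < (z ^ 2).val := by
  obtain ⟨z, hz⟩ := exists_isPrimitiveRoot_of_dvd (show 3 ∣ p - 1 by omega)
  have sq_sq : (z ^ 2) ^ 2 = z := by linear_combination z * hz.pow_eq_one
  have val_ne : z.val ≠ (z ^ 2).val := fun h ↦
    absurd (hz.pow_inj (i := 1) (j := 2) (by norm_num) (by norm_num)
      (by simpa using ZMod.val_injective p h)) (by norm_num)
  rcases val_ne.lt_or_gt with hlt | hgt
  · exact ⟨z, hz, hlt⟩
  · exact ⟨z ^ 2, hz.pow_of_coprime 2 (by norm_num), by rwa [sq_sq]⟩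

theorem exists_two_lt_and_cube_eq_one_or_eight (hp : p % 3 = 1) (hp7 : p ≠ 7) :
    ∃ i : ℕ, 2 < i ∧ 3 * i < p ∧ ((i : ZMod p) ^ 3 = 1 ∨ (i : ZMod p) ^ 3 = 8) := by
  have : Fact (Nat.Prime 7) := ⟨by norm_num⟩
  have p_ne_two : p ≠ 2 := by omega
  have two_ne_zero : (2 : ZMod p) ≠ 0 := mod_cast ZMod.prime_ne_zero p 2 p_ne_two
  have seven_ne_zero : (7 : ZMod p) ≠ 0 := mod_cast ZMod.prime_ne_zero p 7 hp7
  obtain ⟨z, hz, hlt⟩ := exists_isPrimitiveRoot_three_val_lt_val_sq hp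
  obtain ⟨i, hip, hi | hi⟩ := exists_three_mul_lt_and_natCast_eq
    (sq_add_self_add_one_eq_zero_of_isPrimitiveRoot_three hz) hlt
  · exact ⟨i, two_lt_of_natCast_eq_isPrimitiveRoot_three hz seven_ne_zero hi, hip,
      .inl (by rw [hi, hz.pow_eq_one])⟩
  · have hz2 : IsPrimitiveRoot (z ^ 2) 3 := hz.pow_of_coprime 2 (by norm_num)
    refine ⟨i, two_lt_of_natCast_eq_two_mul_isPrimitiveRoot_three hz2 two_ne_zero seven_ne_zero hi,
      hip, .inr ?_⟩
    rw [hi, mul_pow, hz2.pow_eq_one]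
    norm_num

theorem exists_lt_and_cube_eq_cube (hp : p % 3 = 1) :
    ∃ i j : ℕ, 1 ≤ i ∧ i < j ∧ 3 * j < p ∧ (i : ZMod p) ^ 3 = (j : ZMod p) ^ 3 := by
  rcases eq_or_ne p 7 with rfl | hp7
  · exact ⟨1, 2, by norm_num, by norm_num, by norm_num, rfl⟩
  · obtain ⟨j, hj, hjp, hj1 | hj8⟩ := exists_two_lt_and_cube_eq_one_or_eight hp hp7
    · exact ⟨1, j, le_rfl, by omega, hjp, by simp [hj1]⟩
    · exact ⟨2, j, by norm_num, hj, hjp, by norm_num [hj8]⟩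

end PrimeModulus

/-- If `p = 3n + 1` is prime, then `p` is not a strong representative of order `n`:
some `1 ≤ i < j ≤ n` satisfy `i³ ≡ j³ (mod p)`. In particular, if `n > 2` there is
`2 < i ≤ n` with `i³ ≡ 1 (mod p)` or `i³ ≡ 8 (mod p)`. -/
theorem no_three_representative (n : ℕ) (hn : 0 < n)
    (hp : Nat.Prime (3 * n + 1)) :
    (∃ i j : ℕ, 1 ≤ i ∧ i < j ∧ j ≤ n ∧
      (i : ZMod (3 * n + 1)) ^ 3 = (j : ZMod (3 * n + 1)) ^ 3) ∧
    (2 < n → ∃ i : ℕ, 2 < i ∧ i ≤ n ∧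
      ((i : ZMod (3 * n + 1)) ^ 3 = 1 ∨ (i : ZMod (3 * n + 1)) ^ 3 = 8)) := by
  have : Fact (3 * n + 1).Prime := ⟨hp⟩
  have hmod : (3 * n + 1) % 3 = 1 := by omega
  constructor
  · obtain ⟨i, j, hi, hij, hj, hcube⟩ := exists_lt_and_cube_eq_cube hmod
    exact ⟨i, j, hi, hij, by omega, hcube⟩
  · intro hn2
    obtain ⟨i, hi2, hi, hcube⟩ := exists_two_lt_and_cube_eq_one_or_eight hmod (by omega)
    exact ⟨i, hi2, by omega, hcube⟩
end

section
/- Let k be a positive multiple of 4 and let n be a positive integer such that p = kn + 1 is prime and 1^k, 2^k, …, n^k are pairwise incongruent modulo p (i.e., p is a k-representative). Then p < k². In particular, for each such k there are only finitely many k-representatives. -/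
/-!
Suppose `k` is even, `k > 2` and `p ≥ k²`, so that `p < (n + 1)²`. The cyclic group `(ZMod p)ˣ` has
order `k * n`, hence contains an element `ω` of order `k`, and `ω ≠ ±1`. Thue's lemma provides
integers `x, y`, not both zero and of absolute value at most `n`, with `x ≡ ω y` modulo `p`.
Then `|x|^k ≡ |y|^k` because `k` is even and `ω^k = 1`, while `|x| ≠ |y|` because `ω ≠ ±1`.
When `4 ∣ k` one may take `ω² = -1`, with `x, y` coming from a representation `p = x² + y²`.
-/

section ShortVectors

variable {N s k : ℕ} {ω : ZMod N}

/-- Thue's lemma. -/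
theorem exists_intCast_eq_mul_intCast_of_lt_sq [NeZero N] (ω : ZMod N) (hN : N < (s + 1) ^ 2) :
    ∃ x y : ℤ, (x ≠ 0 ∨ y ≠ 0) ∧ x.natAbs ≤ s ∧ y.natAbs ≤ s ∧ (x : ZMod N) = ω * y := by
  have hcard : Fintype.card (ZMod N) < Fintype.card (Fin (s + 1) × Fin (s + 1)) := by
    simpa [ZMod.card, ← sq] using hN
  obtain ⟨⟨a, b⟩, ⟨c, d⟩, hne, heq⟩ := Fintype.exists_ne_map_eq_of_card_lt
    (fun u : Fin (s + 1) × Fin (s + 1) => ((u.1 : ℕ) : ZMod N) - ω * (u.2 : ℕ)) hcard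
  refine ⟨(a : ℤ) - (c : ℤ), (b : ℤ) - (d : ℤ), ?_, by omega, by omega, ?_⟩
  · contrapose! hne
    ext <;> lia
  · push_cast
    linear_combination heq

theorem eq_zero_of_intCast_eq_zero_of_natAbs_lt {x : ℤ} (hx : (x : ZMod N) = 0)
    (hlt : x.natAbs < N) : x = 0 :=
  Int.eq_zero_of_dvd_of_natAbs_lt_natAbs ((ZMod.intCast_zmod_eq_zero_iff_dvd x N).mp hx) hlt

theorem natCast_natAbs_pow_of_even {R : Type*} [Ring R] (hk : Even k) (x : ℤ) :
    (x.natAbs : R) ^ k = (x : R) ^ k := by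
  rw [← Int.cast_natCast, Int.natCast_natAbs, ← Int.cast_pow, hk.pow_abs, Int.cast_pow]

theorem intCast_eq_zero_of_natAbs_eq (hω : IsUnit (ω ^ 2 - 1)) {x y : ℤ}
    (hxy : (x : ZMod N) = ω * y) (habs : x.natAbs = y.natAbs) : (y : ZMod N) = 0 := by
  refine hω.mul_right_eq_zero.mp ?_
  rcases Int.natAbs_eq_natAbs_iff.mp habs with rfl | rfl
  · linear_combination (-1 - ω) * hxy
  · push_cast at hxy
    linear_combination (1 - ω) * hxy

theorem exists_lt_natCast_pow_eq_pow (hk : Even k) (hk0 : k ≠ 0) (hωk : ω ^ k = 1)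
    (hω : IsUnit (ω ^ 2 - 1)) (hs : s < N) (hN : N < (s + 1) ^ 2) :
    ∃ i j : ℕ, 1 ≤ i ∧ i < j ∧ j ≤ s ∧ (i : ZMod N) ^ k = (j : ZMod N) ^ k := by
  have : NeZero N := ⟨by lia⟩
  obtain ⟨x, y, hne, hxs, hys, hxy⟩ := exists_intCast_eq_mul_intCast_of_lt_sq ω hN
  have hy : y ≠ 0 := by
    rintro rfl
    have hx0 : (x : ZMod N) = 0 := by simpa using hxy
    simp [eq_zero_of_intCast_eq_zero_of_natAbs_lt hx0 (hxs.trans_lt hs)] at hne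
  have hyN : (y : ZMod N) ≠ 0 := fun h =>
    hy (eq_zero_of_intCast_eq_zero_of_natAbs_lt h (hys.trans_lt hs))
  have hx : x ≠ 0 := by
    rintro rfl
    rw [Int.cast_zero, eq_comm, (IsUnit.of_pow_eq_one hωk hk0).mul_right_eq_zero] at hxy
    exact hyN hxy
  have hpow : (x.natAbs : ZMod N) ^ k = (y.natAbs : ZMod N) ^ k := by
    rw [natCast_natAbs_pow_of_even hk, natCast_natAbs_pow_of_even hk, hxy, mul_pow, hωk, one_mul]
  rcases lt_trichotomy x.natAbs y.natAbs with hlt | heq | hlt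
  · exact ⟨_, _, Int.natAbs_pos.mpr hx, hlt, hys, hpow⟩
  · exact absurd (intCast_eq_zero_of_natAbs_eq hω hxy heq) hyN
  · exact ⟨_, _, Int.natAbs_pos.mpr hy, hlt, hxs, hpow.symm⟩

end ShortVectors

theorem exists_isPrimitiveRoot_of_dvd_card_sub_one {F : Type*} [Field F] [Finite F] {k : ℕ}
    (hk : k ∣ Nat.card F - 1) : ∃ ω : F, IsPrimitiveRoot ω k := by
  obtain ⟨g, hg⟩ := IsCyclic.exists_ofOrder_eq_natCard (α := Fˣ)
  rw [Nat.card_units] at hg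
  have hpos : 0 < Nat.card F - 1 := Nat.sub_pos_of_lt Finite.one_lt_card
  have hprim : IsPrimitiveRoot (g : F) (Nat.card F - 1) :=
    IsPrimitiveRoot.coe_units_iff.mpr (hg ▸ IsPrimitiveRoot.orderOf g)
  obtain ⟨m, hm⟩ := hk
  exact ⟨_, hprim.pow hpos (hm.trans (mul_comm k m))⟩

theorem mul_add_one_lt_succ_sq_of_sq_le {k n : ℕ} (hk : 1 < k) (h : k ^ 2 ≤ k * n + 1) :
    k * n + 1 < (n + 1) ^ 2 := by
  have hkn : k ≤ n := by
    by_contra! hlt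
    nlinarith
  nlinarith

theorem k_representative_lt_k_sq_general (k n : ℕ) (hk : 2 < k) (heven : Even k)
    (hp : Nat.Prime (k * n + 1))
    (hdist : ∀ i j : ℕ, 1 ≤ i → i < j → j ≤ n →
      (i : ZMod (k * n + 1)) ^ k ≠ (j : ZMod (k * n + 1)) ^ k) :
    k * n + 1 < k ^ 2 := by
  have : Fact (k * n + 1).Prime := ⟨hp⟩
  by_contra! hle
  obtain ⟨ω, hω⟩ : ∃ ω : ZMod (k * n + 1), IsPrimitiveRoot ω k :=
    exists_isPrimitiveRoot_of_dvd_card_sub_one (by simp)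
  have hunit : IsUnit (ω ^ 2 - 1) :=
    (sub_ne_zero.mpr (hω.pow_ne_one_of_pos_of_lt two_ne_zero hk)).isUnit
  obtain ⟨i, j, hi, hij, hj, hpow⟩ := exists_lt_natCast_pow_eq_pow heven (by lia) hω.pow_eq_one
    hunit (by nlinarith) (mul_add_one_lt_succ_sq_of_sq_le (by lia) hle)
  exact hdist i j hi hij hj hpow

/-- If `k` is a positive multiple of 4 and `p = k*n + 1` is a `k`-representative
(i.e. prime with `1^k, …, n^k` pairwise incongruent mod `p`), then `p < k²`. -/
theorem k_representative_lt_k_sq (k n : ℕ) (hk : 0 < k) (h4 : 4 ∣ k) (hn : 0 < n)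
    (hp : Nat.Prime (k * n + 1))
    (hdist : ∀ i j : ℕ, 1 ≤ i → i < j → j ≤ n →
      (i : ZMod (k * n + 1)) ^ k ≠ (j : ZMod (k * n + 1)) ^ k) :
    k * n + 1 < k ^ 2 :=
  k_representative_lt_k_sq_general k n (by lia) (even_iff_two_dvd.mpr (by lia)) hp hdist
end

section
/- Fix an integer k > 2, and set C_k = (k-1)/(2k²) if k is odd and C_k = (k-2)/(2k²) if k is even, and ε(k) = 1/φ(k) where φ is Euler's totient function. Then there exist a constant A > 0 and a bound p₀ such that for every prime p > p₀ with p ≡ 1 (mod k), writing n = (p-1)/k, the number N(p) of pairs (a, b) with 1 ≤ a < b ≤ n and a^k ≡ b^k (mod p) satisfies |N(p) − C_k · p| ≤ A · p^{1−ε(k)}. -/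
/-- The number of coincidences `a^k ≡ b^k (mod p)` with `1 ≤ a < b ≤ (p-1)/k`. -/
def coincidences (k p : ℕ) : ℕ :=
  ((Finset.Icc 1 ((p - 1) / k) ×ˢ Finset.Icc 1 ((p - 1) / k)).filter
    (fun q : ℕ × ℕ => q.1 < q.2 ∧ (q.1 : ZMod p) ^ k = (q.2 : ZMod p) ^ k)).card

/-- Elkies' constant `C_k = (k-1)/(2k²)` for odd `k`, `(k-2)/(2k²)` for even `k`. -/
noncomputable def elkiesConst (k : ℕ) : ℝ :=
  if Odd k then ((k : ℝ) - 1) / (2 * (k : ℝ) ^ 2) else ((k : ℝ) - 2) / (2 * (k : ℝ) ^ 2)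

/-!
A coincidence `a ^ k ≡ b ^ k` is a point `(a, b)` of `[1, n]²` on one of the lines `b = ζ a`
modulo `p`, where `ζ` is a `k`-th root of unity: `ζ = 1` gives the diagonal and `ζ = -1` would need
`p ∣ a + b ≤ 2 n < p`, so each of the other roots should contribute about `n² / p`, and together
they count every coincidence twice.

To count the points on such a line, Dirichlet's theorem provides `ζ ≡ r / q` with `r` and `q`
small. If `ζ` has order `d > 2`, then `p` divides the value at `(r, q)` of the homogenized
cyclotomic polynomial `Φ_d`, which has no real zero; hence `max q |r| ≫ p ^ (1 / φ(k))`, and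
balancing the approximation gives `p ^ (1 / φ(k)) ≪ q ≪ p ^ (1 - 1 / φ(k))` with `|r| q ≤ p`. When
`a` runs through `q` consecutive integers, `q b - r a` takes every integer value exactly once, so
the multiples of `p` among its values number `q n / p + O(1)`. Adding up the blocks leaves an
error `O(n / q + q)`.
-/

section LinePoints

open Finset

theorem card_Ioc_filter_dvd_le {m : ℤ} (hm : 0 < m) {a b : ℤ} (hab : a ≤ b) :
    (#{x ∈ Ioc a b | m ∣ x} : ℝ) ≤ (b - a) / m + 1 := by
  have hcard : (#{x ∈ Ioc a b | m ∣ x} : ℤ) = ⌊b / (m : ℚ)⌋ - ⌊a / (m : ℚ)⌋ := by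
    rw [Int.Ioc_filter_dvd_card a b hm, max_eq_left]
    exact sub_nonneg.2 (Int.floor_mono (by gcongr))
  have hle : (#{x ∈ Ioc a b | m ∣ x} : ℚ) ≤ (b - a) / m + 1 := by
    have hcard' : (#{x ∈ Ioc a b | m ∣ x} : ℚ) = ⌊b / (m : ℚ)⌋ - ⌊a / (m : ℚ)⌋ := by
      exact_mod_cast hcard
    rw [hcard', sub_div]
    linarith [Int.floor_le (b / (m : ℚ)), Int.lt_floor_add_one (a / (m : ℚ))]
  exact_mod_cast hle

theorem le_card_Ioc_filter_dvd {m : ℤ} (hm : 0 < m) (a b : ℤ) :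
    ((b - a) / m - 1 : ℝ) ≤ #{x ∈ Ioc a b | m ∣ x} := by
  have hcard : ⌊b / (m : ℚ)⌋ - ⌊a / (m : ℚ)⌋ ≤ (#{x ∈ Ioc a b | m ∣ x} : ℤ) := by
    rw [Int.Ioc_filter_dvd_card a b hm]
    exact le_max_left _ _
  have hle : ((b - a) / m - 1 : ℚ) ≤ #{x ∈ Ioc a b | m ∣ x} := by
    have hcard' : (⌊b / (m : ℚ)⌋ - ⌊a / (m : ℚ)⌋ : ℚ) ≤ #{x ∈ Ioc a b | m ∣ x} := by
      exact_mod_cast hcard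
    rw [sub_div]
    linarith [Int.lt_floor_add_one (b / (m : ℚ)), Int.floor_le (a / (m : ℚ))]
  exact_mod_cast hle

theorem abs_sub_sub_le_of_monotone_of_increment {F : ℕ → ℝ} (hF : Monotone F) {q : ℕ} (hq : 0 < q)
    {L E : ℝ} (hL : 0 ≤ L) (hE : ∀ a, |F (a + q) - F a - L| ≤ E) (m : ℕ) :
    |F m - F 0 - m / q * L| ≤ E * (m / q + 1) + L := by
  have hE0 : 0 ≤ E := (abs_nonneg _).trans (hE 0)
  have hblocks (t : ℕ) : |F (t * q) - F 0 - t * L| ≤ t * E := by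
    induction t with
    | zero => simp
    | succ t ih =>
      have hstep := hE (t * q)
      rw [abs_le] at ih hstep ⊢
      rw [add_one_mul]
      push_cast
      constructor <;> linarith
  set t := m / q
  have hbelow := abs_le.1 (hblocks t)
  have habove := abs_le.1 (hblocks (t + 1))
  have hmono_below : F (t * q) ≤ F m := hF (Nat.div_mul_le_self m q)
  have hmono_above : F m ≤ F ((t + 1) * q) := hF (Nat.lt_div_mul_add hq |>.le.trans_eq (by ring))
  have ht_le : (t : ℝ) ≤ m / q := Nat.cast_div_le
  have hle_t : (m / q : ℝ) ≤ t + 1 := by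
    rw [div_le_iff₀ (by positivity)]
    exact_mod_cast (Nat.lt_div_mul_add hq).le.trans_eq (by ring : _ = (t + 1) * q)
  have htL := mul_le_mul_of_nonneg_right ht_le hL
  have hLt := mul_le_mul_of_nonneg_right hle_t hL
  have htE := mul_le_mul_of_nonneg_right ht_le hE0
  push_cast at habove
  rw [abs_le]
  constructor <;> linarith

/-- The points of the box `I × J` lying on the line `y = ζ x` modulo `p`. -/
def modLinePoints {p : ℕ} (ζ : ZMod p) (I J : Finset ℕ) : Finset (ℕ × ℕ) :=
  {x ∈ I ×ˢ J | (x.2 : ZMod p) = ζ * x.1}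

section Slope

variable {p q : ℕ} {ζ : ZMod p} {r : ℤ}

theorem natCast_eq_mul_iff_dvd (hqr : IsCoprime (q : ℤ) r) (hζ : (r : ZMod p) = ζ * q) (a b : ℕ) :
    (b : ZMod p) = ζ * a ↔ (p : ℤ) ∣ q * b - r * a := by
  have hq : IsUnit (q : ZMod p) := by
    obtain ⟨u, v, huv⟩ := hqr
    have huv' : (u * q + v * r : ZMod p) = 1 := by
      exact_mod_cast congrArg (Int.cast (R := ZMod p)) huv
    refine .of_mul_eq_one (u + v * ζ) ?_
    linear_combination huv' - (v : ZMod p) * hζ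
  rw [← ZMod.intCast_zmod_eq_zero_iff_dvd, ← hq.mul_right_inj, ← sub_eq_zero]
  push_cast
  rw [hζ]
  ring_nf

theorem injOn_mul_sub_mul (hqr : IsCoprime (q : ℤ) r) (a : ℕ) (J : Finset ℕ) :
    Set.InjOn (fun x : ℕ × ℕ ↦ (q * x.2 - r * x.1 : ℤ)) (Ioc a (a + q) ×ˢ J : Finset (ℕ × ℕ)) := by
  rintro ⟨x, y⟩ hxy ⟨x', y'⟩ hxy' heq
  simp only [coe_product, coe_Ioc, Set.mem_prod, Set.mem_Ioc] at hxy hxy' heq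
  have hdvd : (q : ℤ) ∣ x - x' := hqr.dvd_of_dvd_mul_left ⟨y - y', by linear_combination -heq⟩
  have hx : (x : ℤ) - x' = 0 := Int.eq_zero_of_abs_lt_dvd hdvd (by rw [abs_lt]; omega)
  have hq : (q : ℤ) ≠ 0 := by omega
  have hy : (y : ℤ) = y' := mul_left_cancel₀ hq (by linear_combination heq + r * hx)
  simp only [Prod.mk.injEq]
  omega

theorem exists_mem_Ioc_mul_sub_mul_eq (hqr : IsCoprime (q : ℤ) r) (hq : 0 < q) (a z : ℤ) :
    ∃ x ∈ Ioc a (a + q), ∃ y : ℤ, q * y - r * x = z := by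
  obtain ⟨u, v, huv⟩ := hqr
  obtain ⟨t, ht, -⟩ := existsUnique_add_zsmul_mem_Ioc (Int.natCast_pos.2 hq) (-z * v) a
  refine ⟨-z * v + t • (q : ℤ), by simpa using ht, z * u + r * t, ?_⟩
  rw [smul_eq_mul]
  linear_combination z * huv

theorem abs_mul_sub_le_of_mem_Ioc {a x : ℤ} (hx : x ∈ Ioc a (a + q)) : |r * (x - a)| ≤ |r| * q := by
  rw [mem_Ioc] at hx
  rw [abs_mul, abs_of_pos (by omega : 0 < x - a)]
  gcongr
  omega

theorem card_modLinePoints_Ioc_le [NeZero p] (hqr : IsCoprime (q : ℤ) r)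
    (hζ : (r : ZMod p) = ζ * q) (hrq : |r| * q ≤ p) (a : ℕ) {c d : ℕ} (hcd : c ≤ d) :
    (#(modLinePoints ζ (Ioc a (a + q)) (Ioc c d)) : ℝ) ≤ q * (d - c) / p + 3 := by
  have hp : 0 < p := NeZero.pos p
  set lo : ℤ := q * c - r * a - p
  set hi : ℤ := q * d - r * a + p
  have hmaps : Set.MapsTo (fun x : ℕ × ℕ ↦ (q * x.2 - r * x.1 : ℤ))
      (modLinePoints ζ (Ioc a (a + q)) (Ioc c d)) ({z ∈ Ioc lo hi | (p : ℤ) ∣ z} : Finset ℤ) := by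
    rintro ⟨x, y⟩ hxy
    simp only [modLinePoints, coe_filter, mem_product, mem_Ioc, Set.mem_ofPred_eq,
      natCast_eq_mul_iff_dvd hqr hζ] at hxy ⊢
    obtain ⟨⟨hx, hy⟩, hdvd⟩ := hxy
    have hrx := abs_le.1 <| (abs_mul_sub_le_of_mem_Ioc (r := r) (a := a) (x := x)
      (mem_Ioc.2 (by omega))).trans hrq
    have hcy : (q * c : ℤ) < q * y := by gcongr <;> omega
    have hyd : (q * y : ℤ) ≤ q * d := by gcongr; omega
    refine ⟨⟨?_, ?_⟩, hdvd⟩ <;> linarith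
  have hinj := (injOn_mul_sub_mul hqr a (Ioc c d)).mono
    (coe_subset.2 (filter_subset _ _ : modLinePoints ζ _ _ ⊆ _))
  have hlohi : lo ≤ hi := by
    have : (q * c : ℤ) ≤ q * d := by gcongr
    omega
  calc (#(modLinePoints ζ (Ioc a (a + q)) (Ioc c d)) : ℝ)
      ≤ #{z ∈ Ioc lo hi | (p : ℤ) ∣ z} := by exact_mod_cast card_le_card_of_injOn _ hmaps hinj
    _ ≤ (hi - lo) / (p : ℤ) + 1 := card_Ioc_filter_dvd_le (by exact_mod_cast hp) hlohi
    _ = q * (d - c) / p + 3 := by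
      simp only [lo, hi]
      push_cast
      field_simp
      ring

theorem le_card_modLinePoints_Ioc [NeZero p] (hqr : IsCoprime (q : ℤ) r) (hq : 0 < q)
    (hζ : (r : ZMod p) = ζ * q) (hrq : |r| * q ≤ p) (a c d : ℕ) :
    (q * (d - c) / p - 3 : ℝ) ≤ #(modLinePoints ζ (Ioc a (a + q)) (Ioc c d)) := by
  have hp : 0 < p := NeZero.pos p
  set lo : ℤ := q * c - r * a + p
  set hi : ℤ := q * d - r * a - p
  have hsurj : Set.SurjOn (fun x : ℕ × ℕ ↦ (q * x.2 - r * x.1 : ℤ))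
      (modLinePoints ζ (Ioc a (a + q)) (Ioc c d)) ({z ∈ Ioc lo hi | (p : ℤ) ∣ z} : Finset ℤ) := by
    intro z hz
    simp only [coe_filter, mem_Ioc, Set.mem_ofPred_eq] at hz
    obtain ⟨x, hx, y, rfl⟩ := exists_mem_Ioc_mul_sub_mul_eq hqr hq a z
    have hrx := abs_le.1 ((abs_mul_sub_le_of_mem_Ioc (r := r) hx).trans hrq)
    have hcy : (c : ℤ) < y :=
      lt_of_mul_lt_mul_left (by linarith : (q * c : ℤ) < q * y) (by positivity)
    have hyd : y ≤ d := le_of_mul_le_mul_left (by linarith : (q * y : ℤ) ≤ q * d) (by positivity)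
    rw [mem_Ioc] at hx
    lift x to ℕ using by omega
    lift y to ℕ using by omega
    refine ⟨(x, y), ?_, rfl⟩
    simp only [modLinePoints, coe_filter, mem_product, mem_Ioc, Set.mem_ofPred_eq,
      natCast_eq_mul_iff_dvd hqr hζ]
    exact ⟨by omega, hz.2⟩
  calc (q * (d - c) / p - 3 : ℝ) = (hi - lo) / (p : ℤ) - 1 := by
        simp only [lo, hi]
        push_cast
        field_simp
        ring
    _ ≤ #{z ∈ Ioc lo hi | (p : ℤ) ∣ z} := le_card_Ioc_filter_dvd (by exact_mod_cast hp) lo hi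
    _ ≤ #(modLinePoints ζ (Ioc a (a + q)) (Ioc c d)) := by
      exact_mod_cast card_le_card_of_surjOn _ hsurj

theorem card_modLinePoints_Ioc_add (ζ : ZMod p) (a b : ℕ) (J : Finset ℕ) :
    #(modLinePoints ζ (Ioc 0 (a + b)) J) =
      #(modLinePoints ζ (Ioc 0 a) J) + #(modLinePoints ζ (Ioc a (a + b)) J) := by
  have hdisj : Disjoint (Ioc 0 a) (Ioc a (a + b)) := Ioc_disjoint_Ioc_of_le le_rfl
  rw [modLinePoints, ← Ioc_union_Ioc_eq_Ioc a.zero_le (a.le_add_right b), union_product,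
    filter_union, card_union_of_disjoint]
  · rfl
  · exact disjoint_filter_filter (disjoint_product.2 (.inl hdisj))

theorem abs_card_modLinePoints_sub_le [NeZero p] (hqr : IsCoprime (q : ℤ) r) (hq : 0 < q)
    (hζ : (r : ZMod p) = ζ * q) (hrq : |r| * q ≤ p) (m : ℕ) {c d : ℕ} (hcd : c ≤ d) :
    |(#(modLinePoints ζ (Ioc 0 m) (Ioc c d)) : ℝ) - m * (d - c) / p| ≤
      3 * (m / q + 1) + q * (d - c) / p := by
  set F : ℕ → ℝ := fun m ↦ #(modLinePoints ζ (Ioc 0 m) (Ioc c d)) with hF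
  have hstep (a : ℕ) : F (a + q) - F a = #(modLinePoints ζ (Ioc a (a + q)) (Ioc c d)) := by
    simp only [hF, card_modLinePoints_Ioc_add ζ a q]
    push_cast
    ring
  have hmono : Monotone F := monotone_nat_of_le_succ fun a ↦ by
    simp only [hF, card_modLinePoints_Ioc_add ζ a 1]
    exact_mod_cast Nat.le_add_right _ _
  have hblock (a : ℕ) : |F (a + q) - F a - q * (d - c) / p| ≤ 3 := by
    rw [hstep, abs_le]
    constructor
    · linarith [le_card_modLinePoints_Ioc hqr hq hζ hrq a c d]
    · linarith [card_modLinePoints_Ioc_le hqr hζ hrq a hcd]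
  have hcd' : (0 : ℝ) ≤ d - c := sub_nonneg.2 (by exact_mod_cast hcd)
  have hF0 : F 0 = 0 := by simp [hF, modLinePoints]
  convert abs_sub_sub_le_of_monotone_of_increment hmono hq (by positivity) hblock m using 2
  rw [hF0]
  field_simp
  ring

end Slope

end LinePoints

section ShortVector

open Polynomial Finset

theorem exists_isCoprime_intCast_eq_mul {p : ℕ} [Fact p.Prime] (ζ : ZMod p) {N : ℕ} (hN : 0 < N)
    (hNp : N < p) :
    ∃ (q : ℕ) (r : ℤ), 0 < q ∧ q ≤ N ∧ |r| * (N + 1) ≤ p ∧ IsCoprime (q : ℤ) r ∧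
      (r : ZMod p) = ζ * q := by
  have hp : 0 < p := hN.trans hNp
  obtain ⟨x, hx, hden⟩ := Real.exists_rat_abs_sub_le_and_den_le (ζ.val / p) hN
  refine ⟨x.den, ζ.val * x.den - p * x.num, x.den_pos, hden, ?_, ?_, by simp⟩
  · have hr : |(ζ.val * x.den - p * x.num : ℝ)| = p * x.den * |(ζ.val / p - x : ℝ)| := by
      have hden0 : (x.den : ℝ) ≠ 0 := by exact_mod_cast x.den_nz
      rw [← abs_of_pos (by positivity : (0 : ℝ) < p * x.den), ← abs_mul, Rat.cast_def]
      congr 1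
      field_simp
    have hbound : |(ζ.val * x.den - p * x.num : ℝ)| * (N + 1) ≤ p := by
      have hpos : (0 : ℝ) < (N + 1) * x.den := by positivity
      rw [le_div_iff₀ hpos] at hx
      calc |(ζ.val * x.den - p * x.num : ℝ)| * (N + 1)
          = p * (|(ζ.val / p - x : ℝ)| * ((N + 1) * x.den)) := by rw [hr]; ring
        _ ≤ p := mul_le_of_le_one_right p.cast_nonneg hx
    exact_mod_cast hbound
  · have hpden : IsCoprime (x.den : ℤ) p := by
      exact_mod_cast (Nat.coprime_of_lt_prime x.den_nz (hden.trans_lt hNp) Fact.out).symm.isCoprime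
    have hnum : IsCoprime (x.den : ℤ) x.num := (Rat.isCoprime_num_den x).symm
    simpa [sub_eq_add_neg, add_comm, mul_comm] using
      (hpden.mul_right hnum).neg_right.add_mul_left_right ζ.val

/-- The `ℓ¹`-norm of the coefficient vector of an integer polynomial. -/
def coeffNorm (f : ℤ[X]) : ℕ :=
  ∑ i ∈ range (f.natDegree + 1), (f.coeff i).natAbs

theorem coeffNorm_pos {f : ℤ[X]} (hf : f ≠ 0) : 0 < coeffNorm f :=
  sum_pos' (fun _ _ ↦ Nat.zero_le _)
    ⟨f.natDegree, self_mem_range_succ _, Int.natAbs_pos.2 (leadingCoeff_ne_zero.2 hf)⟩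

theorem natAbs_eval_scaleRoots_le (f : ℤ[X]) {q r : ℤ} {M : ℕ} (hq : q.natAbs ≤ M)
    (hr : r.natAbs ≤ M) :
    ((f.scaleRoots q).eval r).natAbs ≤ coeffNorm f * M ^ f.natDegree := by
  rw [eval_eq_sum_range, natDegree_scaleRoots, coeffNorm, sum_mul]
  refine (Int.natAbs_sum_le _ _).trans (sum_le_sum fun i hi ↦ ?_)
  have hdeg : f.natDegree - i + i = f.natDegree := Nat.sub_add_cancel (mem_range_succ_iff.1 hi)
  rw [coeff_scaleRoots, Int.natAbs_mul, Int.natAbs_mul, Int.natAbs_pow, Int.natAbs_pow, mul_assoc,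
    ← hdeg, pow_add, hdeg]
  gcongr

theorem le_coeffNorm_mul_pow {p : ℕ} {ζ : ZMod p} {f : ℤ[X]}
    (hζ : f.eval₂ (Int.castRingHom (ZMod p)) ζ = 0)
    (hf : ∀ x : ℚ, f.eval₂ (Int.castRingHom ℚ) x ≠ 0)
    {q r : ℤ} (hq : q ≠ 0) (hqr : (r : ZMod p) = ζ * q) {M : ℕ}
    (hqM : q.natAbs ≤ M) (hrM : r.natAbs ≤ M) :
    p ≤ coeffNorm f * M ^ f.natDegree := by
  have hdvd : (p : ℤ) ∣ (f.scaleRoots q).eval r := by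
    rw [← ZMod.intCast_zmod_eq_zero_iff_dvd, ← eq_intCast (Int.castRingHom (ZMod p)),
      ← eval₂_at_apply, eq_intCast, hqr, mul_comm]
    exact scaleRoots_eval₂_eq_zero _ hζ
  have hne : (f.scaleRoots q).eval r ≠ 0 := by
    have hq' : (q : ℚ) ≠ 0 := by exact_mod_cast hq
    have hscale := scaleRoots_eval₂_mul (p := f) (Int.castRingHom ℚ) (r / q) q
    rw [eq_intCast, mul_div_cancel₀ _ hq', ← eq_intCast (Int.castRingHom ℚ) r, eval₂_at_apply]
      at hscale
    intro hzero
    rw [hzero, map_zero] at hscale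
    exact mul_ne_zero (pow_ne_zero _ hq') (hf _) hscale.symm
  calc p ≤ ((f.scaleRoots q).eval r).natAbs :=
        Nat.le_of_dvd (Int.natAbs_pos.2 hne) (Int.natCast_dvd.1 hdvd)
    _ ≤ coeffNorm f * M ^ f.natDegree := natAbs_eval_scaleRoots_le f hqM hrM

/-- A bound for the coefficient norms of all `Φ_d` with `d ∣ k`. -/
noncomputable def cyclotomicNorm (k : ℕ) : ℕ :=
  ∑ d ∈ k.divisors, coeffNorm (cyclotomic d ℤ)

theorem coeffNorm_cyclotomic_le {d k : ℕ} (hdk : d ∣ k) (hk : k ≠ 0) :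
    coeffNorm (cyclotomic d ℤ) ≤ cyclotomicNorm k :=
  single_le_sum (f := fun d ↦ coeffNorm (cyclotomic d ℤ)) (fun _ _ ↦ Nat.zero_le _)
    (Nat.mem_divisors.2 ⟨hdk, hk⟩)

theorem cyclotomicNorm_pos {k : ℕ} (hk : k ≠ 0) : 0 < cyclotomicNorm k :=
  calc 0 < coeffNorm (cyclotomic 1 ℤ) := coeffNorm_pos (cyclotomic_ne_zero 1 ℤ)
    _ ≤ cyclotomicNorm k := coeffNorm_cyclotomic_le (one_dvd k) hk

theorem two_lt_orderOf {R : Type*} [Ring R] [NoZeroDivisors R] {ζ : R}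
    (hfin : IsOfFinOrder ζ) (h1 : ζ ≠ 1) (hneg : ζ ≠ -1) : 2 < orderOf ζ := by
  have hpos : 0 < orderOf ζ := hfin.orderOf_pos
  have hne_one : orderOf ζ ≠ 1 := by rwa [Ne, orderOf_eq_one_iff]
  have hne_two : orderOf ζ ≠ 2 := fun h ↦
    not_or_intro h1 hneg (sq_eq_one_iff.1 (h ▸ pow_orderOf_eq_one ζ))
  omega

theorem rpow_inv_totient_le_cyclotomicNorm_mul {p k : ℕ} [Fact p.Prime] (hk : k ≠ 0) {ζ : ZMod p}
    (hζ : ζ ^ k = 1) (h1 : ζ ≠ 1) (hneg : ζ ≠ -1) {q r : ℤ} (hq : q ≠ 0)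
    (hqr : (r : ZMod p) = ζ * q) {M : ℕ} (hqM : q.natAbs ≤ M) (hrM : r.natAbs ≤ M) :
    (p : ℝ) ^ (1 / k.totient : ℝ) ≤ cyclotomicNorm k * M := by
  set d := orderOf ζ
  have hdk : d ∣ k := orderOf_dvd_of_pow_eq_one hζ
  have hd : 2 < d :=
    two_lt_orderOf (isOfFinOrder_iff_pow_eq_one.2 ⟨k, Nat.pos_of_ne_zero hk, hζ⟩) h1 hneg
  have hroot : (cyclotomic d ℤ).eval₂ (Int.castRingHom (ZMod p)) ζ = 0 := by
    rw [← eval_map, map_cyclotomic]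
    exact (IsPrimitiveRoot.orderOf ζ).isRoot_cyclotomic (by omega)
  have hnoroot (x : ℚ) : (cyclotomic d ℤ).eval₂ (Int.castRingHom ℚ) x ≠ 0 := by
    rw [← eval_map, map_cyclotomic]
    exact (cyclotomic_pos hd x).ne'
  have htot : 0 < k.totient := Nat.totient_pos.2 (Nat.pos_of_ne_zero hk)
  have hM : 0 < M := (Int.natAbs_pos.2 hq).trans_le hqM
  have hp : p ≤ (cyclotomicNorm k * M) ^ k.totient :=
    calc p ≤ coeffNorm (cyclotomic d ℤ) * M ^ d.totient := by
          simpa only [natDegree_cyclotomic] using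
            le_coeffNorm_mul_pow hroot hnoroot hq hqr hqM hrM
      _ ≤ cyclotomicNorm k ^ k.totient * M ^ k.totient := by
          gcongr
          · exact (coeffNorm_cyclotomic_le hdk hk).trans (Nat.le_self_pow htot.ne' _)
          · exact Nat.le_of_dvd htot (Nat.totient_dvd_of_dvd hdk)
      _ = (cyclotomicNorm k * M) ^ k.totient := (mul_pow _ _ _).symm
  rw [one_div, Real.rpow_inv_le_iff_of_pos (by positivity) (by positivity) (by positivity),
    Real.rpow_natCast]
  exact_mod_cast hp

end ShortVector

section RootsOfUnity

open Finset Polynomial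

theorem one_le_rpow_one_sub_one_div {x : ℝ} (hx : 1 ≤ x) (n : ℕ) : 1 ≤ x ^ (1 - 1 / n : ℝ) :=
  Real.one_le_rpow hx (sub_nonneg.2 (by simpa using Nat.cast_inv_le_one n))

theorem rpow_one_sub_mul_rpow {x : ℝ} (hx : 0 < x) (s : ℝ) : x ^ (1 - s) * x ^ s = x := by
  rw [← Real.rpow_add hx, sub_add_cancel, Real.rpow_one]

theorem natCast_lt_rpow_one_div {c m n : ℕ} (hn : n ≠ 0) (h : c ^ n < m) :
    (c : ℝ) < (m : ℝ) ^ (1 / n : ℝ) := by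
  rw [one_div, Real.lt_rpow_inv_iff_of_pos c.cast_nonneg m.cast_nonneg (by positivity),
    Real.rpow_natCast]
  exact_mod_cast h

-- Approximating to order `C p ^ (1 - 1 / φ(k))` makes `|r| < p ^ (1 / φ(k)) / C`, so that the
-- lower bound for `max q |r|` becomes one for `q`.
theorem exists_isCoprime_intCast_eq_mul_of_pow_eq_one {p k : ℕ} [Fact p.Prime] (hk : k ≠ 0)
    (hp : cyclotomicNorm k ^ k.totient < p) {ζ : ZMod p} (hζ : ζ ^ k = 1) (h1 : ζ ≠ 1)
    (hneg : ζ ≠ -1) :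
    ∃ (q : ℕ) (r : ℤ), IsCoprime (q : ℤ) r ∧ (r : ZMod p) = ζ * q ∧ |r| * q ≤ p ∧
      (p : ℝ) ^ (1 / k.totient : ℝ) ≤ cyclotomicNorm k * q ∧
      q ≤ cyclotomicNorm k * (p : ℝ) ^ (1 - 1 / k.totient : ℝ) := by
  have hp1 : 1 ≤ p := (Fact.out : p.Prime).one_le
  set C := cyclotomicNorm k
  set R : ℝ := (p : ℝ) ^ (1 / k.totient : ℝ)
  set P : ℝ := (p : ℝ) ^ (1 - 1 / k.totient : ℝ)
  have hC : (1 : ℝ) ≤ C := by exact_mod_cast cyclotomicNorm_pos hk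
  have hP : 1 ≤ P := one_le_rpow_one_sub_one_div (by exact_mod_cast hp1) _
  have hPR : P * R = p := rpow_one_sub_mul_rpow (by exact_mod_cast hp1) _
  have hCR : C < R := natCast_lt_rpow_one_div (Nat.totient_pos.2 (Nat.pos_of_ne_zero hk)).ne' hp
  set N := ⌊C * P⌋₊
  have hN : 0 < N := Nat.floor_pos.2 (one_le_mul_of_one_le_of_one_le hC hP)
  have hN_le : (N : ℝ) ≤ C * P := Nat.floor_le (by positivity)
  have hNp : N < p := by
    suffices (N : ℝ) < p by exact_mod_cast this
    calc (N : ℝ) ≤ C * P := hN_le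
      _ < R * P := by gcongr
      _ = p := by rw [mul_comm, hPR]
  obtain ⟨q, r, hq, hqN, hrN, hqr, hrζ⟩ := exists_isCoprime_intCast_eq_mul ζ hN hNp
  refine ⟨q, r, hqr, hrζ, ?_, ?_, le_trans (by exact_mod_cast hqN) hN_le⟩
  · calc |r| * q ≤ |r| * (N + 1) := by gcongr; omega
      _ ≤ p := hrN
  have hmax : R ≤ C * (max q r.natAbs : ℕ) :=
    rpow_inv_totient_le_cyclotomicNorm_mul hk hζ h1 hneg (q := q) (by omega) (by simpa using hrζ)
      (le_max_left _ _) (le_max_right _ _)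
  suffices r.natAbs ≤ q by rwa [max_eq_left this] at hmax
  by_contra! hqr'
  rw [max_eq_right hqr'.le] at hmax
  have hr : (0 : ℝ) < r.natAbs := by exact_mod_cast hq.trans hqr'
  have hrN' : (r.natAbs * (N + 1) : ℝ) ≤ p := by
    rw [Nat.cast_natAbs]
    exact_mod_cast hrN
  refine lt_irrefl (p : ℝ) ?_
  calc (p : ℝ) = P * R := hPR.symm
    _ ≤ P * (C * r.natAbs) := by gcongr
    _ = r.natAbs * (C * P) := by ring
    _ < r.natAbs * (N + 1) := by gcongr; exact Nat.lt_floor_add_one _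
    _ ≤ p := hrN'

theorem abs_card_modLinePoints_sub_le_of_pow_eq_one {p k : ℕ} [Fact p.Prime] (hk : k ≠ 0)
    (hp : cyclotomicNorm k ^ k.totient < p) {ζ : ZMod p} (hζ : ζ ^ k = 1) (h1 : ζ ≠ 1)
    (hneg : ζ ≠ -1) {m n : ℕ} (hm : m ≤ p) (hn : n ≤ p) :
    |(#(modLinePoints ζ (Ioc 0 m) (Ioc 0 n)) : ℝ) - m * n / p| ≤
      (4 * cyclotomicNorm k + 3) * (p : ℝ) ^ (1 - 1 / k.totient : ℝ) := by
  have hp0 : (0 : ℝ) < p := by exact_mod_cast (Fact.out : p.Prime).pos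
  have hp1 : (1 : ℝ) ≤ p := by exact_mod_cast (Fact.out : p.Prime).one_le
  obtain ⟨q, r, hqr, hrζ, hrq, hle_q, hq_le⟩ :=
    exists_isCoprime_intCast_eq_mul_of_pow_eq_one hk hp hζ h1 hneg
  set C := cyclotomicNorm k
  set R : ℝ := (p : ℝ) ^ (1 / k.totient : ℝ)
  set P : ℝ := (p : ℝ) ^ (1 - 1 / k.totient : ℝ)
  have hP : 1 ≤ P := one_le_rpow_one_sub_one_div hp1 _
  have hPR : P * R = p := rpow_one_sub_mul_rpow hp0 _
  have hR : 0 < R := by positivity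
  have hq : (0 : ℝ) < q := pos_of_mul_pos_right (hR.trans_le hle_q) C.cast_nonneg
  have hmq : (m / q : ℝ) ≤ C * P := by
    rw [div_le_iff₀ hq]
    calc (m : ℝ) ≤ p := by exact_mod_cast hm
      _ = P * R := hPR.symm
      _ ≤ P * (C * q) := by gcongr
      _ = C * P * q := by ring
  have hqn : (q * n / p : ℝ) ≤ C * P :=
    calc (q * n / p : ℝ) ≤ q := by
          rw [mul_div_assoc]
          exact mul_le_of_le_one_right hq.le ((div_le_one hp0).2 (by exact_mod_cast hn))
      _ ≤ C * P := hq_le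
  have hcount := abs_card_modLinePoints_sub_le hqr (by exact_mod_cast hq) hrζ hrq m n.zero_le
  rw [Nat.cast_zero, sub_zero] at hcount
  linarith

theorem two_mul_card_filter_lt {α : Type*} [LinearOrder α] (s : Finset α) (ρ : α → α → Prop)
    [DecidableRel ρ] (hρ : ∀ a b, ρ a b → ρ b a) :
    2 * #{x ∈ s ×ˢ s | x.1 < x.2 ∧ ρ x.1 x.2} = #{x ∈ s ×ˢ s | x.1 ≠ x.2 ∧ ρ x.1 x.2} := by
  have hswap : #{x ∈ s ×ˢ s | x.2 < x.1 ∧ ρ x.1 x.2} = #{x ∈ s ×ˢ s | x.1 < x.2 ∧ ρ x.1 x.2} :=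
    card_equiv (Equiv.prodComm α α) (by grind [Prod.fst_swap, Prod.snd_swap])
  have hdisj : Disjoint {x ∈ s ×ˢ s | x.1 < x.2 ∧ ρ x.1 x.2}
      {x ∈ s ×ˢ s | x.2 < x.1 ∧ ρ x.1 x.2} :=
    disjoint_filter.2 fun _ _ hlt hgt ↦ hlt.1.asymm hgt.1
  rw [two_mul]
  nth_rw 2 [← hswap]
  rw [← card_union_of_disjoint hdisj, ← filter_or]
  congr 1
  ext x
  grind

section ZMod

variable {p : ℕ} [Fact p.Prime]

/-- The `k`-th roots of unity modulo `p` other than `±1`: the possible ratios `b / a` of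
coincidences. -/
noncomputable def nontrivialRoots (k p : ℕ) [Fact p.Prime] : Finset (ZMod p) :=
  ((nthRootsFinset k (1 : ZMod p)).erase 1).erase (-1)

theorem mem_nontrivialRoots {k : ℕ} (hk : 0 < k) {ζ : ZMod p} :
    ζ ∈ nontrivialRoots k p ↔ ζ ≠ -1 ∧ ζ ≠ 1 ∧ ζ ^ k = 1 := by
  rw [nontrivialRoots, mem_erase, mem_erase, mem_nthRootsFinset hk]

theorem natCast_ne_zero_of_mem_Ioc {n a : ℕ} (hn : n < p) (ha : a ∈ Ioc 0 n) :
    (a : ZMod p) ≠ 0 := by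
  rw [mem_Ioc] at ha
  rw [Ne, ZMod.natCast_eq_zero_iff]
  exact Nat.not_dvd_of_pos_of_lt ha.1 (ha.2.trans_lt hn)

theorem div_mem_nontrivialRoots {k n a b : ℕ} (hk : 0 < k) (hn : 2 * n < p) (ha : a ∈ Ioc 0 n)
    (hb : b ∈ Ioc 0 n) (hab : a ≠ b) (hpow : (a : ZMod p) ^ k = (b : ZMod p) ^ k) :
    (b / a : ZMod p) ∈ nontrivialRoots k p := by
  have ha0 : (a : ZMod p) ≠ 0 := natCast_ne_zero_of_mem_Ioc (by omega) ha
  rw [mem_Ioc] at ha hb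
  rw [mem_nontrivialRoots hk]
  refine ⟨fun h ↦ ?_, fun h ↦ ?_, ?_⟩
  · have hsum : ((a + b : ℕ) : ZMod p) = 0 := by
      rw [div_eq_iff ha0] at h
      push_cast
      rw [h]
      ring
    rw [ZMod.natCast_eq_zero_iff] at hsum
    exact Nat.not_dvd_of_pos_of_lt (by omega) (by omega) hsum
  · rw [div_eq_one_iff_eq ha0, ZMod.natCast_eq_natCast_iff', Nat.mod_eq_of_lt (by omega),
      Nat.mod_eq_of_lt (by omega)] at h
    exact hab h.symm
  · rw [div_pow, ← hpow, div_self (pow_ne_zero _ ha0)]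

theorem filter_div_eq_modLinePoints {k n : ℕ} (hk : 0 < k) (hn : n < p) {ζ : ZMod p}
    (hζ : ζ ∈ nontrivialRoots k p) :
    ({x ∈ {x ∈ Ioc 0 n ×ˢ Ioc 0 n | x.1 ≠ x.2 ∧ (x.1 : ZMod p) ^ k = (x.2 : ZMod p) ^ k} |
      (x.2 / x.1 : ZMod p) = ζ} : Finset (ℕ × ℕ)) = modLinePoints ζ (Ioc 0 n) (Ioc 0 n) := by
  obtain ⟨-, hζ1, hζk⟩ := (mem_nontrivialRoots hk).1 hζ
  ext ⟨a, b⟩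
  simp only [modLinePoints, mem_filter, mem_product]
  constructor
  · rintro ⟨⟨hab, -⟩, hdiv⟩
    exact ⟨hab, (div_eq_iff (natCast_ne_zero_of_mem_Ioc hn hab.1)).1 hdiv⟩
  · rintro ⟨hab, hline⟩
    have ha0 : (a : ZMod p) ≠ 0 := natCast_ne_zero_of_mem_Ioc hn hab.1
    refine ⟨⟨hab, ?_, ?_⟩, (div_eq_iff ha0).2 hline⟩
    · rintro rfl
      exact hζ1 (mul_right_cancel₀ ha0 (by rw [← hline, one_mul]))
    · rw [hline, mul_pow, hζk, one_mul]

theorem two_mul_coincidences_eq_sum {k : ℕ} (hk : 2 < k) :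
    2 * coincidences k p =
      ∑ ζ ∈ nontrivialRoots k p,
        #(modLinePoints ζ (Ioc 0 ((p - 1) / k)) (Ioc 0 ((p - 1) / k))) := by
  have hp : 0 < p := (Fact.out : p.Prime).pos
  set n := (p - 1) / k with hn
  have hnp : 2 * n < p := by
    have : n * k ≤ p - 1 := Nat.div_mul_le_self _ _
    nlinarith [Nat.sub_lt hp one_pos]
  rw [coincidences, ← hn, ← zero_add 1, Icc_add_one_left_eq_Ioc,
    two_mul_card_filter_lt _ (fun a b : ℕ ↦ (a : ZMod p) ^ k = (b : ZMod p) ^ k)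
      (fun _ _ ↦ Eq.symm),
    card_eq_sum_card_fiberwise (f := fun x : ℕ × ℕ ↦ (x.2 / x.1 : ZMod p))
      (t := nontrivialRoots k p)]
  · exact sum_congr rfl fun ζ hζ ↦ by
      rw [filter_div_eq_modLinePoints (by omega) (by omega) hζ]
  · intro x hx
    simp only [coe_filter, mem_product, Set.mem_ofPred_eq] at hx
    exact div_mem_nontrivialRoots (by omega) hnp hx.1.1 hx.1.2 hx.2.1 hx.2.2

theorem card_nthRootsFinset_of_dvd {k : ℕ} (hk : k ∣ p - 1) :
    #(nthRootsFinset k (1 : ZMod p)) = k := by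
  have : NeZero (p - 1) := ⟨(Nat.sub_pos_of_lt (Fact.out : p.Prime).one_lt).ne'⟩
  have := HasEnoughRootsOfUnity.of_dvd (ZMod p) hk
  obtain ⟨ζ, hζ⟩ := HasEnoughRootsOfUnity.exists_primitiveRoot (ZMod p) k
  exact hζ.card_nthRootsFinset

theorem card_nontrivialRoots {k : ℕ} (hk : 2 < k) (hkp : k ∣ p - 1) :
    (#(nontrivialRoots k p) : ℝ) = 2 * k ^ 2 * elkiesConst k := by
  have hp : 1 < p := (Fact.out : p.Prime).one_lt
  have : Fact (2 < p) := ⟨by have := Nat.le_of_dvd (by omega) hkp; omega⟩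
  have hk0 : (k : ℝ) ≠ 0 := by positivity
  have hcard : #((nthRootsFinset k (1 : ZMod p)).erase 1) = k - 1 := by
    rw [card_erase_of_mem ((mem_nthRootsFinset (by omega) 1).2 (one_pow k)),
      card_nthRootsFinset_of_dvd hkp]
  rw [nontrivialRoots, elkiesConst]
  split_ifs with hodd
  · rw [erase_eq_of_notMem, hcard, Nat.cast_sub (by omega)]
    · push_cast
      field_simp
    · rw [mem_erase, mem_nthRootsFinset (by omega), hodd.neg_one_pow]
      exact fun h ↦ h.1 h.2
  · rw [card_erase_of_mem, hcard, Nat.sub_sub, Nat.cast_sub (by omega)]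
    · push_cast
      field_simp
    · rw [mem_erase, mem_nthRootsFinset (by omega), (Nat.not_odd_iff_even.1 hodd).neg_one_pow]
      exact ⟨ZMod.neg_one_ne_one, rfl⟩

theorem card_nontrivialRoots_le (k : ℕ) : #(nontrivialRoots k p) ≤ k :=
  calc #(nontrivialRoots k p) ≤ #(nthRootsFinset k (1 : ZMod p)) :=
        card_le_card ((erase_subset _ _).trans (erase_subset _ _))
    _ ≤ k := by
        rw [nthRootsFinset_def]
        exact (Multiset.toFinset_card_le _).trans (card_nthRoots k 1)

theorem abs_two_mul_coincidences_sub_le {k : ℕ} (hk : 2 < k)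
    (hp : cyclotomicNorm k ^ k.totient < p) :
    |(2 * coincidences k p : ℝ) -
        #(nontrivialRoots k p) * (((p - 1) / k : ℕ) * ((p - 1) / k : ℕ) / p)| ≤
      k * ((4 * cyclotomicNorm k + 3) * (p : ℝ) ^ (1 - 1 / k.totient : ℝ)) := by
  set n := (p - 1) / k
  set B : ℝ := (4 * cyclotomicNorm k + 3) * (p : ℝ) ^ (1 - 1 / k.totient : ℝ)
  have hn : n ≤ p := (Nat.div_le_self _ _).trans (Nat.sub_le _ _)
  have hsum : (2 * coincidences k p : ℝ) =
      ∑ ζ ∈ nontrivialRoots k p, (#(modLinePoints ζ (Ioc 0 n) (Ioc 0 n)) : ℝ) := by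
    exact_mod_cast two_mul_coincidences_eq_sum hk
  rw [hsum, ← nsmul_eq_mul, ← sum_const, ← sum_sub_distrib]
  calc |∑ ζ ∈ nontrivialRoots k p, ((#(modLinePoints ζ (Ioc 0 n) (Ioc 0 n)) : ℝ) - n * n / p)|
      ≤ ∑ ζ ∈ nontrivialRoots k p, |(#(modLinePoints ζ (Ioc 0 n) (Ioc 0 n)) : ℝ) - n * n / p| :=
        abs_sum_le_sum_abs _ _
    _ ≤ #(nontrivialRoots k p) * B := by
        refine (sum_le_card_nsmul _ _ B fun ζ hζ ↦ ?_).trans_eq (nsmul_eq_mul _ _)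
        obtain ⟨hneg, h1, hζk⟩ := (mem_nontrivialRoots (by omega)).1 hζ
        exact abs_card_modLinePoints_sub_le_of_pow_eq_one (by omega) hp hζk h1 hneg hn hn
    _ ≤ k * B := by
        gcongr
        exact card_nontrivialRoots_le k

end ZMod

end RootsOfUnity

theorem abs_div_mul_div_sub_le_one {m k : ℕ} (hk : 2 ≤ k) (hm : 1 ≤ m) (hkm : k ∣ m - 1) :
    |(((m - 1) / k : ℕ) * ((m - 1) / k : ℕ) / m - m / k ^ 2 : ℝ)| ≤ 1 := by
  have hm' : (1 : ℝ) ≤ m := by exact_mod_cast hm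
  have hk' : (2 : ℝ) ≤ k := by exact_mod_cast hk
  have hdiff : (((m - 1) / k : ℕ) * ((m - 1) / k : ℕ) / m - m / k ^ 2 : ℝ) =
      -((2 * m - 1) / (k ^ 2 * m)) := by
    rw [Nat.cast_div hkm (by positivity), Nat.cast_sub hm]
    push_cast
    field_simp
    ring
  have hnum : (0 : ℝ) ≤ 2 * m - 1 := by linarith
  rw [hdiff, abs_neg, abs_of_nonneg (by positivity), div_le_one (by positivity)]
  nlinarith [mul_le_mul_of_nonneg_right (pow_le_pow_left₀ zero_le_two hk' 2) hnum]

/-- Elkies' estimate: for fixed `k > 2` and primes `p = k*n + 1` sufficiently large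
(where `n = (p-1)/k`), the number `N(p)` of coincidences `a^k ≡ b^k (mod p)` with
`1 ≤ a < b ≤ n` satisfies `|N(p) - C_k p| ≤ A p^{1 - 1/φ(k)}`. -/
theorem elkies_coincidence_count (k : ℕ) (hk : 2 < k) :
    ∃ A : ℝ, 0 < A ∧ ∃ p₀ : ℕ, ∀ p : ℕ, p.Prime → p₀ < p → p % k = 1 →
      |(coincidences k p : ℝ) - elkiesConst k * (p : ℝ)|
        ≤ A * (p : ℝ) ^ ((1 : ℝ) - 1 / (Nat.totient k : ℝ)) := by
  refine ⟨k * (4 * cyclotomicNorm k + 4), by positivity, cyclotomicNorm k ^ k.totient,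
    fun p hprime hp hpk ↦ ?_⟩
  have : Fact p.Prime := ⟨hprime⟩
  have hkp : k ∣ p - 1 := hpk ▸ Nat.dvd_sub_mod p
  have hcount := abs_le.1 (abs_two_mul_coincidences_sub_le hk hp)
  set P : ℝ := (p : ℝ) ^ (1 - 1 / k.totient : ℝ)
  set s : ℝ := ((nontrivialRoots k p).card : ℝ)
  have hP : 1 ≤ P := one_le_rpow_one_sub_one_div (by exact_mod_cast hprime.one_le) _
  have hs : s ≤ k := Nat.cast_le.2 (card_nontrivialRoots_le k)
  have hmain : |s * ((((p - 1) / k : ℕ) * ((p - 1) / k : ℕ) / p) - p / k ^ 2)| ≤ k * P := by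
    rw [abs_mul, Nat.abs_cast]
    gcongr
    exact (abs_div_mul_div_sub_le_one hk.le hprime.one_le hkp).trans hP
  have hconst : 2 * (elkiesConst k * p) = s * (p / k ^ 2) := by
    simp only [s]
    rw [card_nontrivialRoots hk hkp]
    field_simp
  have hA : 0 ≤ k * (4 * cyclotomicNorm k + 4) * P := by positivity
  rw [abs_le] at hmain ⊢
  constructor <;> linarith
end

section
/- Let n be a positive integer, let (G, +) be an abelian group of order n, and let h : {1,…,n} → G be a partial G-isomorphism. Then h extends to a unique multiplicative map ĥ : K_n → G, i.e., a unique map with ĥ(ab) = ĥ(a) + ĥ(b) for all a, b ∈ K_n and ĥ(i) = h(i) for all i ∈ {1,…,n}. Moreover, the map h⁻¹ ∘ ĥ : K_n → {1,…,n} is an n-satisfactory coloring of K_n; equivalently, for every a ∈ K_n and all integers i, j with 1 ≤ i < j ≤ n, ĥ(ia) ≠ ĥ(ja). -/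
/-!
A function that is additive on products within a divisor-closed set `S` is determined there by its
values at primes: `h m` is the sum of the `h p` over the prime factors of `m`. For `S = {1, …, n}`
this shows that the completely additive function with prime values `h p` extends `h`; for `S = K_n`
it shows that no other extension exists. Cancelling `ĥ a` from `ĥ (i * a) = ĥ (j * a)` reduces the
coloring property to the injectivity of `h`.
-/

section PrimeFactorSum

variable {M : Type*} [AddCommMonoid M] {h g : ℕ → M}

/-- The completely additive function with the values of `h` at primes: the sum of `h p` over the
prime factors `p` of `m` with multiplicity, with value `0` at `m = 0`. It is the candidate for the
extension of a partial isomorphism `h`. -/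
noncomputable def primeFactorSum (h : ℕ → M) (m : ℕ) : M :=
  Finsupp.linearCombination ℕ h m.factorization

@[simp]
theorem primeFactorSum_zero : primeFactorSum h 0 = 0 := by
  simp [primeFactorSum]

@[simp]
theorem primeFactorSum_one : primeFactorSum h 1 = 0 := by
  simp [primeFactorSum]

theorem primeFactorSum_prime {p : ℕ} (hp : p.Prime) : primeFactorSum h p = h p := by
  simp [primeFactorSum, hp.factorization]

theorem primeFactorSum_mul {a b : ℕ} (ha : a ≠ 0) (hb : b ≠ 0) :
    primeFactorSum h (a * b) = primeFactorSum h a + primeFactorSum h b := by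
  simp [primeFactorSum, Nat.factorization_mul ha hb]

theorem primeFactorSum_congr {m : ℕ} (hm : ∀ p ∈ m.primeFactors, h p = g p) :
    primeFactorSum h m = primeFactorSum g m := by
  simp only [primeFactorSum, Finsupp.linearCombination_apply]
  exact Finsupp.sum_congr fun p hp => by rw [hm p hp]

end PrimeFactorSum

/-- `h` sends products to sums as long as the factors and the product all lie in `S`. A partial
`G`-isomorphism is a bijection from `{1, …, n}` to `G` with this property for `S = {1, …, n}`. -/
def IsPartialHomOn {M : Type*} [Add M] (h : ℕ → M) (S : Set ℕ) : Prop :=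
  ∀ a b : ℕ, a ∈ S → b ∈ S → a * b ∈ S → h (a * b) = h a + h b

section Cancel

variable {M : Type*} [AddCancelCommMonoid M] {h : ℕ → M} {S : Set ℕ}

theorem IsPartialHomOn.map_eq_zero (hmul : IsPartialHomOn h S) {e : ℕ} (he : IsIdempotentElem e)
    (heS : e ∈ S) : h e = 0 := by
  have hee : h (e * e) = h e + h e := hmul e e heS heS (he.symm ▸ heS)
  rw [he.eq] at hee
  exact left_eq_add.mp hee

theorem IsPartialHomOn.eqOn_primeFactorSum (hmul : IsPartialHomOn h S)
    (hdvd : ∀ {a b : ℕ}, a ∣ b → b ∈ S → a ∈ S) : Set.EqOn (primeFactorSum h) h S := by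
  intro m
  induction m using induction_on_primes with
  | zero => exact fun h0 => primeFactorSum_zero.trans (hmul.map_eq_zero .zero h0).symm
  | one => exact fun h1 => primeFactorSum_one.trans (hmul.map_eq_zero .one h1).symm
  | prime_mul p a hp ih =>
    intro hpa
    rcases eq_or_ne a 0 with rfl | ha
    · exact ih hpa
    have hpS : p ∈ S := hdvd (dvd_mul_right p a) hpa
    have haS : a ∈ S := hdvd (dvd_mul_left a p) hpa
    rw [primeFactorSum_mul hp.ne_zero ha, primeFactorSum_prime hp, ih haS, hmul p a hpS haS hpa]

theorem injOn_primeFactorSum_mul_right (h0 : 0 ∉ S) (hinj : Set.InjOn (primeFactorSum h) S)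
    {a : ℕ} (ha : a ≠ 0) : Set.InjOn (fun i => primeFactorSum h (i * a)) S := by
  intro i hi j hj hij
  have hi0 : i ≠ 0 := ne_of_mem_of_not_mem hi h0
  have hj0 : j ≠ 0 := ne_of_mem_of_not_mem hj h0
  simp only [primeFactorSum_mul hi0 ha, primeFactorSum_mul hj0 ha] at hij
  exact hinj hi hj (add_right_cancel hij)

end Cancel

section Core

variable {n a b : ℕ}

theorem mem_Icc_one_of_dvd (hab : a ∣ b) (hb : b ∈ Set.Icc 1 n) : a ∈ Set.Icc 1 n :=
  ⟨Nat.pos_of_dvd_of_pos hab hb.1, (Nat.le_of_dvd hb.1 hab).trans hb.2⟩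

theorem mem_Kcore_of_dvd (hab : a ∣ b) (hb : b ∈ Kcore n) : a ∈ Kcore n :=
  ⟨Nat.pos_of_dvd_of_pos hab hb.1, fun p hp hpa => hb.2 p hp (hpa.trans hab)⟩

theorem mem_Icc_of_mem_primeFactors_of_mem_Kcore {m p : ℕ} (hm : m ∈ Kcore n)
    (hp : p ∈ m.primeFactors) : p ∈ Set.Icc 1 n :=
  have hprime := Nat.prime_of_mem_primeFactors hp
  ⟨hprime.one_le, hm.2 p hprime (Nat.dvd_of_mem_primeFactors hp)⟩

end Core

theorem partial_isomorphism_extends_general {n : ℕ} {G : Type*} [AddCancelCommMonoid G] {h : ℕ → G}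
    (hinj : Set.InjOn h (Set.Icc 1 n)) (hmul : IsPartialHomOn h (Set.Icc 1 n)) :
    ∃ H : ℕ → G,
      (∀ i ∈ Set.Icc 1 n, H i = h i) ∧
      (∀ a ∈ Kcore n, ∀ b ∈ Kcore n, H (a * b) = H a + H b) ∧
      (∀ H' : ℕ → G, (∀ i ∈ Set.Icc 1 n, H' i = h i) →
        (∀ a ∈ Kcore n, ∀ b ∈ Kcore n, H' (a * b) = H' a + H' b) →
        ∀ m ∈ Kcore n, H' m = H m) ∧
      (∀ a ∈ Kcore n, ∀ i j : ℕ, 1 ≤ i → i < j → j ≤ n →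
        H (i * a) ≠ H (j * a)) := by
  have hext : Set.EqOn (primeFactorSum h) h (Set.Icc 1 n) :=
    hmul.eqOn_primeFactorSum mem_Icc_one_of_dvd
  refine ⟨primeFactorSum h, hext, fun a ha b hb => primeFactorSum_mul ha.1.ne' hb.1.ne', ?_, ?_⟩
  · intro H' hH' hH'mul m hm
    have hpartial : IsPartialHomOn H' (Kcore n) := fun a b ha hb _ => hH'mul a ha b hb
    calc H' m = primeFactorSum H' m := (hpartial.eqOn_primeFactorSum mem_Kcore_of_dvd hm).symm
      _ = primeFactorSum h m := primeFactorSum_congr fun p hp =>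
          hH' p (mem_Icc_of_mem_primeFactors_of_mem_Kcore hm hp)
  · intro a ha i j hi hij hj
    have hcolor : Set.InjOn (fun i => primeFactorSum h (i * a)) (Set.Icc 1 n) :=
      injOn_primeFactorSum_mul_right (by simp) (hext.injOn_iff.mpr hinj) ha.1.ne'
    exact hcolor.ne ⟨hi, hij.le.trans hj⟩ ⟨hi.trans hij.le, hj⟩ hij.ne

/-- A partial `G`-isomorphism `h : {1,…,n} → G` (a bijection with `h(ab) = h a + h b`
whenever `a`, `b`, `ab ∈ {1,…,n}`) extends to a unique multiplicative map
`ĥ : K_n → G`, and the induced coloring is `n`-satisfactory: `ĥ(i*a) ≠ ĥ(j*a)` for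
`a ∈ K_n` and `1 ≤ i < j ≤ n`. -/
theorem partial_isomorphism_extends (n : ℕ) (hn : 0 < n)
    (G : Type*) [AddCommGroup G] [Fintype G] (hcard : Fintype.card G = n)
    (h : ℕ → G)
    (hinj : Set.InjOn h (Set.Icc 1 n))
    (hsurj : Set.SurjOn h (Set.Icc 1 n) Set.univ)
    (hmul : ∀ a b : ℕ, a ∈ Set.Icc 1 n → b ∈ Set.Icc 1 n → a * b ∈ Set.Icc 1 n →
      h (a * b) = h a + h b) :
    ∃ H : ℕ → G,
      (∀ i ∈ Set.Icc 1 n, H i = h i) ∧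
      (∀ a ∈ Kcore n, ∀ b ∈ Kcore n, H (a * b) = H a + H b) ∧
      (∀ H' : ℕ → G, (∀ i ∈ Set.Icc 1 n, H' i = h i) →
        (∀ a ∈ Kcore n, ∀ b ∈ Kcore n, H' (a * b) = H' a + H' b) →
        ∀ m ∈ Kcore n, H' m = H m) ∧
      (∀ a ∈ Kcore n, ∀ i j : ℕ, 1 ≤ i → i < j → j ≤ n →
        H (i * a) ≠ H (j * a)) :=
  partial_isomorphism_extends_general hinj hmul
end

section
/- Let n > 1 be an integer. If there exists a multiplicative n-satisfactory coloring of K_n, then the set of multiplicative n-satisfactory colorings of the positive integers — functions c : ℤ⁺ → {1,…,n} with c(i) = i for all i ∈ {1,…,n}, such that for every positive integer a and all 1 ≤ i < j ≤ n one has c(ia) ≠ c(ja), and such that there is a commutative group operation ⊕ on {1,…,n} with c(ab) = c(a) ⊕ c(b) for all positive integers a, b — has the cardinality of the continuum, 2^{ℵ₀}. -/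
/-- `op` is a commutative group operation on `{1,…,n}`. -/
def IsCommGroupOpOn (n : ℕ) (op : ℕ → ℕ → ℕ) : Prop :=
  (∀ i ∈ Finset.Icc 1 n, ∀ j ∈ Finset.Icc 1 n, op i j ∈ Finset.Icc 1 n) ∧
  (∀ i ∈ Finset.Icc 1 n, ∀ j ∈ Finset.Icc 1 n, op i j = op j i) ∧
  (∀ i ∈ Finset.Icc 1 n, ∀ j ∈ Finset.Icc 1 n, ∀ l ∈ Finset.Icc 1 n,
    op (op i j) l = op i (op j l)) ∧
  (∃ e ∈ Finset.Icc 1 n, (∀ i ∈ Finset.Icc 1 n, op e i = i) ∧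
    (∀ i ∈ Finset.Icc 1 n, ∃ j ∈ Finset.Icc 1 n, op i j = e))

/-!
A multiplicative coloring of `K_n` makes `{1,…,n}` an abelian group in which `i ⊕ j = i * j` as long
as `i * j ≤ n`. A completely multiplicative map from the positive integers to this group may be
prescribed freely on the primes. If it sends every prime `p ≤ n` to `p`, then it fixes `{1,…,n}`,
and cancellation in the group makes it satisfactory. Its values on the infinitely many primes above
`n` are unconstrained, so there are at least `n ^ ℵ₀ = 2 ^ ℵ₀` such colorings.
-/

open Cardinal

universe u v

section PrimeLift

variable {M : Type*} [CommMonoid M] (f : ℕ → M)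

/-- The completely multiplicative function on the positive integers with prescribed values `f p` at
the primes `p`. Values of `f` away from the primes are ignored, and `primeLift f 0 = 1`. -/
noncomputable def primeLift (m : ℕ) : M :=
  m.factorization.prod fun p k => f p ^ k

theorem primeLift_mul {a b : ℕ} (ha : 0 < a) (hb : 0 < b) :
    primeLift f (a * b) = primeLift f a * primeLift f b := by
  rw [primeLift, Nat.factorization_mul ha.ne' hb.ne']
  exact Finsupp.prod_add_index' (fun _ => pow_zero _) fun _ _ _ => pow_add _ _ _

theorem primeLift_prime {p : ℕ} (hp : p.Prime) : primeLift f p = f p := by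
  simp [primeLift, hp.factorization]

end PrimeLift

/-- The primes above `n`, on which a coloring extending one of `K_n` is unconstrained. -/
abbrev LargePrime (n : ℕ) : Type :=
  {p : ℕ // p.Prime ∧ n < p}

theorem infinite_largePrime (n : ℕ) : Infinite (LargePrime n) :=
  Set.infinite_coe_iff.2 <| Set.infinite_of_forall_exists_gt fun N =>
    let ⟨p, hp, hprime⟩ := Nat.exists_infinite_primes (max N n + 1)
    ⟨p, ⟨hprime, by omega⟩, by omega⟩

theorem continuum_le_mk_arrow (α : Type u) (β : Type v) [Infinite α] [Nontrivial β] :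
    𝔠 ≤ #(α → β) := by
  have two_le : 2 ≤ lift.{u} #β := by
    rw [← lift_two.{u}, lift_le, two_le_iff_one_lt]
    exact one_lt_iff_nontrivial.2 ‹_›
  calc
    𝔠 = 2 ^ ℵ₀ := two_power_aleph0.symm
    _ ≤ 2 ^ lift.{v} #α := power_le_power_left two_ne_zero (by simp)
    _ ≤ lift.{u} #β ^ lift.{v} #α := power_le_power_right two_le
    _ = #(α → β) := (mk_arrow α β).symm

/-- `c` is a multiplicative `n`-satisfactory coloring of the positive integers, normalized by
`c i = i` for `1 ≤ i ≤ n`. Nothing is required of `c 0`. -/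
def IsMultiplicativeColoring (n : ℕ) (c : ℕ → ℕ) : Prop :=
  (∀ i ∈ Finset.Icc 1 n, c i = i) ∧
  (∀ m : ℕ, 0 < m → c m ∈ Finset.Icc 1 n) ∧
  (∀ a : ℕ, 0 < a → ∀ i j : ℕ, 1 ≤ i → i < j → j ≤ n → c (i * a) ≠ c (j * a)) ∧
  (∃ op : ℕ → ℕ → ℕ, IsCommGroupOpOn n op ∧
    ∀ a b : ℕ, 0 < a → 0 < b → c (a * b) = op (c a) (c b))

/-- `op` agrees with multiplication of integers on the products that stay inside `{1,…,n}`. -/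
def ExtendsMul (n : ℕ) (op : ℕ → ℕ → ℕ) : Prop :=
  ∀ i j : ℕ, 0 < i → 0 < j → i * j ≤ n → op i j = i * j

theorem mem_Kcore_of_le {n i : ℕ} (hi : 0 < i) (hin : i ≤ n) : i ∈ Kcore n :=
  ⟨hi, fun _ _ hdvd => (Nat.le_of_dvd hi hdvd).trans hin⟩

theorem extendsMul_of_forall_Kcore {n : ℕ} {c : ℕ → ℕ} {op : ℕ → ℕ → ℕ}
    (hfix : ∀ i ∈ Finset.Icc 1 n, c i = i)
    (hmul : ∀ a ∈ Kcore n, ∀ b ∈ Kcore n, c (a * b) = op (c a) (c b)) : ExtendsMul n op := by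
  intro i j hi hj hij
  have hin : i ≤ n := (Nat.le_mul_of_pos_right i hj).trans hij
  have hjn : j ≤ n := (Nat.le_mul_of_pos_left j hi).trans hij
  have h := hmul i (mem_Kcore_of_le hi hin) j (mem_Kcore_of_le hj hjn)
  rwa [hfix i (Finset.mem_Icc.2 ⟨hi, hin⟩), hfix j (Finset.mem_Icc.2 ⟨hj, hjn⟩),
    hfix _ (Finset.mem_Icc.2 ⟨Nat.mul_pos hi hj, hij⟩), eq_comm] at h

namespace IsCommGroupOpOn

variable {n : ℕ} {op : ℕ → ℕ → ℕ}

/-- The abelian group of colors `{1,…,n}` under the operation `op`. It is a structure of its own,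
rather than a subtype, so that its group instance can depend on `op`. -/
@[ext]
structure ColorGroup (hop : IsCommGroupOpOn n op) where
  val : ℕ
  mem_Icc : val ∈ Finset.Icc 1 n

noncomputable instance (hop : IsCommGroupOpOn n op) : CommGroup hop.ColorGroup :=
  have op_mem := hop.1
  have op_comm := hop.2.1
  have op_assoc := hop.2.2.1
  have unit_spec := hop.2.2.2.choose_spec
  have inv_spec (x : hop.ColorGroup) := (unit_spec.2.2 _ x.mem_Icc).choose_spec
  { mul x y := ⟨op x.val y.val, op_mem _ x.mem_Icc _ y.mem_Icc⟩
    one := ⟨_, unit_spec.1⟩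
    inv x := ⟨_, (inv_spec x).1⟩
    mul_assoc x y z := ColorGroup.ext (op_assoc _ x.mem_Icc _ y.mem_Icc _ z.mem_Icc)
    mul_comm x y := ColorGroup.ext (op_comm _ x.mem_Icc _ y.mem_Icc)
    one_mul x := ColorGroup.ext (unit_spec.2.1 _ x.mem_Icc)
    mul_one x := ColorGroup.ext <|
      (op_comm _ x.mem_Icc _ unit_spec.1).trans (unit_spec.2.1 _ x.mem_Icc)
    inv_mul_cancel x := ColorGroup.ext <|
      (op_comm _ (inv_spec x).1 _ x.mem_Icc).trans (inv_spec x).2 }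

variable {hop : IsCommGroupOpOn n op}

theorem val_mul (x y : hop.ColorGroup) : (x * y).val = op x.val y.val :=
  rfl

theorem nontrivial_colorGroup (hn : 1 < n) : Nontrivial hop.ColorGroup :=
  ⟨⟨1, Finset.mem_Icc.2 ⟨le_rfl, hn.le⟩⟩, ⟨2, Finset.mem_Icc.2 ⟨one_le_two, hn⟩⟩, by simp⟩

theorem val_one (hext : ExtendsMul n op) (hn : 0 < n) : (1 : hop.ColorGroup).val = 1 := by
  let u : hop.ColorGroup := ⟨1, Finset.mem_Icc.2 ⟨le_rfl, hn⟩⟩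
  have idempotent : u * u = u := ColorGroup.ext (hext 1 1 one_pos one_pos hn)
  exact congrArg ColorGroup.val (mul_eq_left.1 idempotent).symm

theorem val_eq_self_of_le {χ : ℕ → hop.ColorGroup}
    (hmul : ∀ a b, 0 < a → 0 < b → χ (a * b) = χ a * χ b) (hext : ExtendsMul n op)
    (hprime : ∀ p, p.Prime → p ≤ n → (χ p).val = p) {i : ℕ} (hi : 0 < i) (hin : i ≤ n) :
    (χ i).val = i := by
  induction i using induction_on_primes with
  | zero => exact absurd hi (lt_irrefl 0)
  | one =>
    have map_one : χ 1 = 1 := mul_eq_left.1 (hmul 1 1 one_pos one_pos).symm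
    rw [map_one, val_one hext hin]
  | prime_mul p a hp ih =>
    have ha : 0 < a := Nat.pos_of_mul_pos_left hi
    have hpn : p ≤ n := (Nat.le_mul_of_pos_right p ha).trans hin
    have han : a ≤ n := (Nat.le_mul_of_pos_left a hp.pos).trans hin
    rw [hmul p a hp.pos ha, val_mul, hprime p hp hpn, ih ha han, hext p a hp.pos ha hin]

theorem isMultiplicativeColoring_val {χ : ℕ → hop.ColorGroup}
    (hmul : ∀ a b, 0 < a → 0 < b → χ (a * b) = χ a * χ b) (hext : ExtendsMul n op)
    (hprime : ∀ p, p.Prime → p ≤ n → (χ p).val = p) :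
    IsMultiplicativeColoring n fun m => (χ m).val := by
  have hfix {i : ℕ} (hi : 0 < i) (hin : i ≤ n) : (χ i).val = i :=
    val_eq_self_of_le hmul hext hprime hi hin
  refine ⟨fun i hi => ?_, fun m _ => (χ m).mem_Icc, fun a ha i j hi hij hjn heq => ?_,
    op, hop, fun a b ha hb => congrArg ColorGroup.val (hmul a b ha hb)⟩
  · exact hfix (Finset.mem_Icc.1 hi).1 (Finset.mem_Icc.1 hi).2
  · have hj : 0 < j := hi.trans hij.le
    have hmul_eq : χ i * χ a = χ j * χ a := by
      rw [← hmul i a hi ha, ← hmul j a hj ha]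
      exact ColorGroup.ext heq
    have hval : (χ i).val = (χ j).val := congrArg ColorGroup.val (mul_right_cancel hmul_eq)
    rw [hfix hi (hij.le.trans hjn), hfix hj hjn] at hval
    exact hij.ne hval

/-- Colors for the primes: `p` itself if `p ≤ n`, and the freely chosen color `t p` if `p > n`. The
values at non-primes are irrelevant. -/
noncomputable def primeColor (t : LargePrime n → hop.ColorGroup) : ℕ → hop.ColorGroup :=
  Function.extend Subtype.val t fun p => if h : p ∈ Finset.Icc 1 n then ⟨p, h⟩ else 1

theorem primeColor_coe (t : LargePrime n → hop.ColorGroup) (p : LargePrime n) :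
    primeColor t p = t p :=
  Subtype.val_injective.extend_apply _ _ _

theorem val_primeColor_of_le (t : LargePrime n → hop.ColorGroup) {p : ℕ} (hp : p.Prime)
    (hpn : p ≤ n) : (primeColor t p).val = p := by
  have not_large : ¬∃ q : LargePrime n, q.1 = p := by
    rintro ⟨q, rfl⟩
    exact hpn.not_gt q.2.2
  rw [primeColor, Function.extend_apply' _ _ _ not_large,
    dif_pos (Finset.mem_Icc.2 ⟨hp.one_le, hpn⟩)]

theorem isMultiplicativeColoring_primeLift (hext : ExtendsMul n op)
    (t : LargePrime n → hop.ColorGroup) :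
    IsMultiplicativeColoring n fun m => (primeLift (primeColor t) m).val :=
  isMultiplicativeColoring_val (fun _ _ => primeLift_mul _) hext fun p hp hpn => by
    rw [primeLift_prime _ hp, val_primeColor_of_le t hp hpn]

theorem val_primeLift_primeColor_injective :
    Function.Injective fun (t : LargePrime n → hop.ColorGroup) (m : ℕ) =>
      (primeLift (primeColor t) m).val := by
  intro t u htu
  funext p
  have hp : primeLift (primeColor t) p = primeLift (primeColor u) p :=
    ColorGroup.ext (congrFun htu p)
  rwa [primeLift_prime _ p.2.1, primeLift_prime _ p.2.1, primeColor_coe, primeColor_coe] at hp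

theorem continuum_le_mk_isMultiplicativeColoring (hop : IsCommGroupOpOn n op)
    (hext : ExtendsMul n op) (hn : 1 < n) : 𝔠 ≤ #{c // IsMultiplicativeColoring n c} := by
  have := infinite_largePrime n
  have := nontrivial_colorGroup (hop := hop) hn
  calc
    𝔠 ≤ #(LargePrime n → hop.ColorGroup) := continuum_le_mk_arrow _ _
    _ ≤ #{c // IsMultiplicativeColoring n c} :=
      mk_le_of_injective (f := fun t => ⟨_, isMultiplicativeColoring_primeLift hext t⟩)
        fun _ _ h => val_primeLift_primeColor_injective (congrArg Subtype.val h)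

end IsCommGroupOpOn

/-- If there is a multiplicative `n`-satisfactory coloring of `K_n` (with `n > 1`),
then the set of multiplicative `n`-satisfactory colorings of the positive integers
has the cardinality of the continuum. -/
theorem continuum_many_multiplicative_colorings (n : ℕ) (hn : 1 < n)
    (h : ∃ c : ℕ → ℕ,
      (∀ i ∈ Finset.Icc 1 n, c i = i) ∧
      (∀ m ∈ Kcore n, c m ∈ Finset.Icc 1 n) ∧
      (∀ a ∈ Kcore n, ∀ i j : ℕ, 1 ≤ i → i < j → j ≤ n →
        c (i * a) ≠ c (j * a)) ∧
      (∃ op : ℕ → ℕ → ℕ, IsCommGroupOpOn n op ∧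
        ∀ a ∈ Kcore n, ∀ b ∈ Kcore n, c (a * b) = op (c a) (c b))) :
    Cardinal.mk {c : ℕ → ℕ //
      (∀ i ∈ Finset.Icc 1 n, c i = i) ∧
      (∀ m : ℕ, 0 < m → c m ∈ Finset.Icc 1 n) ∧
      (∀ a : ℕ, 0 < a → ∀ i j : ℕ, 1 ≤ i → i < j → j ≤ n →
        c (i * a) ≠ c (j * a)) ∧
      (∃ op : ℕ → ℕ → ℕ, IsCommGroupOpOn n op ∧
        ∀ a b : ℕ, 0 < a → 0 < b → c (a * b) = op (c a) (c b))} =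
    Cardinal.continuum := by
  obtain ⟨c, hfix, -, -, op, hop, hmul⟩ := h
  refine le_antisymm ?_ (hop.continuum_le_mk_isMultiplicativeColoring
    (extendsMul_of_forall_Kcore hfix hmul) hn)
  calc
    _ ≤ #(ℕ → ℕ) := mk_subtype_le _
    _ = 𝔠 := by simp
end

section
/- Let n be a positive integer and let c : K_n → {1,…,n} be an n-satisfactory coloring with c(i) = i for all i ∈ {1,…,n}. If c is translation invariant, then c is multiplicative: the binary operation on {1,…,n} defined by i ⊕ j = c(ij) is a commutative group operation, and c(ab) = c(a) ⊕ c(b) for all a, b ∈ K_n. -/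
/-!
Invariance and `c (c b) = c b` give `c (a * c b) = c (a * b)`: inside a product, a factor may be
replaced by its color. Hence `c` carries multiplication over to the colors, which become a
commutative monoid with identity `c 1`. Invariance also makes this monoid cancellative, and a
finite cancellative monoid is a group.
-/

/-- `op` is a commutative group operation on the set `S`. The operation is total on the ambient
type, as in `IsCommGroupOpOn`, which is the case `S = {1, …, n}`. -/
def IsCommGroupOpOnSet {α : Type*} (S : Set α) (op : α → α → α) : Prop :=
  (∀ i ∈ S, ∀ j ∈ S, op i j ∈ S) ∧
  (∀ i ∈ S, ∀ j ∈ S, op i j = op j i) ∧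
  (∀ i ∈ S, ∀ j ∈ S, ∀ l ∈ S, op (op i j) l = op i (op j l)) ∧
  (∃ e ∈ S, (∀ i ∈ S, op e i = i) ∧ (∀ i ∈ S, ∃ j ∈ S, op i j = e))

/-- A translation invariant coloring `c` of a submonoid `K` whose colors are elements of `K`: `c`
retracts `K` onto the set `S` of colors. Values of `c` outside `K` are unconstrained. -/
structure IsTranslationInvariantRetraction {M : Type*} [CommMonoid M] (K : Submonoid M)
    (S : Set M) (c : M → M) : Prop where
  subset : S ⊆ K
  mapsTo : Set.MapsTo c K S
  eqOn_id : Set.EqOn c id S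
  map_mul_left_eq_iff : ∀ k ∈ K, ∀ l ∈ K, ∀ m ∈ K, (c (k * l) = c (k * m) ↔ c l = c m)

namespace IsTranslationInvariantRetraction

variable {M : Type*} [CommMonoid M] {K : Submonoid M} {S : Set M} {c : M → M} {a b d : M}

theorem map_mem (hc : IsTranslationInvariantRetraction K S c) (ha : a ∈ K) : c a ∈ K :=
  hc.subset (hc.mapsTo ha)

theorem map_mul_map_right (hc : IsTranslationInvariantRetraction K S c) (ha : a ∈ K)
    (hb : b ∈ K) : c (a * c b) = c (a * b) :=
  (hc.map_mul_left_eq_iff a ha _ (hc.map_mem hb) b hb).2 (hc.eqOn_id (hc.mapsTo hb))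

theorem map_mul_map_left (hc : IsTranslationInvariantRetraction K S c) (ha : a ∈ K)
    (hb : b ∈ K) : c (c a * b) = c (a * b) := by
  rw [mul_comm, hc.map_mul_map_right hb ha, mul_comm]

theorem map_mul (hc : IsTranslationInvariantRetraction K S c) (ha : a ∈ K) (hb : b ∈ K) :
    c (a * b) = c (c a * c b) := by
  rw [hc.map_mul_map_right (hc.map_mem ha) hb, hc.map_mul_map_left ha hb]

theorem map_mul_assoc (hc : IsTranslationInvariantRetraction K S c) (ha : a ∈ K) (hb : b ∈ K)
    (hd : d ∈ K) : c (c (a * b) * d) = c (a * c (b * d)) := by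
  rw [hc.map_mul_map_left (mul_mem ha hb) hd, hc.map_mul_map_right ha (mul_mem hb hd), mul_assoc]

theorem map_one_mul (hc : IsTranslationInvariantRetraction K S c) (ha : a ∈ S) :
    c (c 1 * a) = a := by
  rw [hc.map_mul_map_left K.one_mem (hc.subset ha), one_mul]
  exact hc.eqOn_id ha

theorem mapsTo_map_mul_left (hc : IsTranslationInvariantRetraction K S c) (ha : a ∈ K) :
    Set.MapsTo (fun x => c (a * x)) S S :=
  fun _ hx => hc.mapsTo (mul_mem ha (hc.subset hx))

theorem injOn_map_mul_left (hc : IsTranslationInvariantRetraction K S c) (ha : a ∈ K) :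
    Set.InjOn (fun x => c (a * x)) S := fun x hx y hy hxy =>
  calc
    x = c x := (hc.eqOn_id hx).symm
    _ = c y := (hc.map_mul_left_eq_iff a ha x (hc.subset hx) y (hc.subset hy)).1 hxy
    _ = y := hc.eqOn_id hy

theorem surjOn_map_mul_left (hc : IsTranslationInvariantRetraction K S c) (hS : S.Finite)
    (ha : a ∈ K) : Set.SurjOn (fun x => c (a * x)) S S :=
  ((hS.injOn_iff_bijOn_of_mapsTo (hc.mapsTo_map_mul_left ha)).1 (hc.injOn_map_mul_left ha)).surjOn

theorem isCommGroupOpOnSet (hc : IsTranslationInvariantRetraction K S c) (hS : S.Finite) :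
    IsCommGroupOpOnSet S (fun i j => c (i * j)) := by
  have map_one_mem : c 1 ∈ S := hc.mapsTo K.one_mem
  exact ⟨fun i hi j hj => hc.mapsTo_map_mul_left (hc.subset hi) hj,
    fun i _ j _ => congrArg c (mul_comm i j),
    fun i hi j hj l hl => hc.map_mul_assoc (hc.subset hi) (hc.subset hj) (hc.subset hl),
    c 1, map_one_mem, fun i hi => hc.map_one_mul hi,
    fun i hi => hc.surjOn_map_mul_left hS (hc.subset hi) map_one_mem⟩

end IsTranslationInvariantRetraction

/-- The `n`-core `K_n` as a submonoid of `ℕ` under multiplication. -/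
def kcoreSubmonoid (n : ℕ) : Submonoid ℕ where
  carrier := Kcore n
  one_mem' := ⟨one_pos, fun _ hp hp1 => absurd hp1 hp.not_dvd_one⟩
  mul_mem' := fun ha hb =>
    ⟨mul_pos ha.1 hb.1, fun p hp hpab => (hp.dvd_mul.1 hpab).elim (ha.2 p hp) (hb.2 p hp)⟩

theorem Icc_subset_kcoreSubmonoid (n : ℕ) : (Finset.Icc 1 n : Set ℕ) ⊆ kcoreSubmonoid n := by
  intro i hi
  obtain ⟨one_le_i, i_le_n⟩ := Finset.mem_Icc.1 hi
  exact ⟨one_le_i, fun p _ hpi => (Nat.le_of_dvd one_le_i hpi).trans i_le_n⟩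

theorem translation_invariant_implies_multiplicative_general {M : Type*} [CommMonoid M]
    {K : Submonoid M} {S : Set M} (hS : S.Finite) {c : M → M}
    (hc : IsTranslationInvariantRetraction K S c) :
    IsCommGroupOpOnSet S (fun i j => c (i * j)) ∧
    ∀ a ∈ K, ∀ b ∈ K, c (a * b) = c (c a * c b) :=
  ⟨hc.isCommGroupOpOnSet hS, fun _ ha _ hb => hc.map_mul ha hb⟩

/-- A translation invariant `n`-satisfactory coloring of `K_n` is multiplicative:
`i ⊕ j := c (i*j)` defines a commutative group operation on `{1,…,n}`, and
`c (a*b) = c a ⊕ c b` for all `a, b ∈ K_n`. -/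
theorem translation_invariant_implies_multiplicative (n : ℕ) (hn : 0 < n)
    (c : ℕ → ℕ)
    (hrange : ∀ m ∈ Kcore n, c m ∈ Finset.Icc 1 n)
    (hid : ∀ i ∈ Finset.Icc 1 n, c i = i)
    (hsat : ∀ a ∈ Kcore n, ∀ i j : ℕ, 1 ≤ i → i < j → j ≤ n →
      c (i * a) ≠ c (j * a))
    (hti : ∀ k ∈ Kcore n, ∀ l ∈ Kcore n, ∀ m ∈ Kcore n,
      (c (k * l) = c (k * m) ↔ c l = c m)) :
    IsCommGroupOpOn n (fun i j => c (i * j)) ∧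
    ∀ a ∈ Kcore n, ∀ b ∈ Kcore n, c (a * b) = c (c a * c b) :=
  translation_invariant_implies_multiplicative_general (Finset.Icc 1 n).finite_toSet
    (K := kcoreSubmonoid n) ⟨Icc_subset_kcoreSubmonoid n, hrange, hid, hti⟩
end

section
/- Let p be a prime and set n = p² − p and G = (ℤ/p²ℤ)ˣ, the unit group modulo p² (which has order n). Then there exists a partial G-isomorphism, i.e., a bijection g : {1,…,n} → G such that g(ij) = g(i)·g(j) whenever i, j, and ij all lie in {1,…,n}. Consequently, there exists an n-satisfactory coloring of K_n for n = p² − p. -/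
/-!
A function on the primes with values in a commutative group extends uniquely to a completely
multiplicative function on the positive integers. Applied to a partial `G`-isomorphism `g`, the
extension `h` agrees with `g` on `{1, …, n}`, so `h (i * a) = g i * h a` runs through all of `G`
exactly once as `i` runs through `{1, …, n}`: coloring `m` by the `i ≤ n` with `g i = h m` is
`n`-satisfactory.

For `G = (ℤ/p²ℤ)ˣ`, send each prime `q ≠ p` to its residue class and `p` to `-1`. A unit with
representative `r ≤ p² - p` is the image of `r`; the remaining ones are `-k` with `0 < k < p`, and
`-k` is the image of `p * k`. So the extension maps `{1, …, p² - p}` onto `G`, and it is bijective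
there because `G` has `p² - p` elements.
-/

section PrimeExtension

variable {M : Type*} [CommMonoid M]

/-- The completely multiplicative function on the positive integers with the same values as `f` at
the primes; its value at `0` is the junk value `1`. -/
noncomputable def primeExtension (f : ℕ → M) (m : ℕ) : M :=
  m.factorization.prod fun q k => f q ^ k

theorem primeExtension_one (f : ℕ → M) : primeExtension f 1 = 1 := by
  simp [primeExtension]

theorem primeExtension_prime (f : ℕ → M) {q : ℕ} (hq : q.Prime) :
    primeExtension f q = f q := by
  simp [primeExtension, hq.factorization]

theorem primeExtension_mul (f : ℕ → M) {a b : ℕ} (ha : a ≠ 0) (hb : b ≠ 0) :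
    primeExtension f (a * b) = primeExtension f a * primeExtension f b := by
  rw [primeExtension, Nat.factorization_mul ha hb]
  exact Finsupp.prod_add_index' (fun q => pow_zero (f q)) fun q => pow_add (f q)

theorem primeExtension_eq_of_map_mul {N : Type*} [CancelCommMonoid N] {f : ℕ → N} {S : Set ℕ}
    (zero_notMem : 0 ∉ S) (mem_of_dvd : ∀ ⦃d m : ℕ⦄, d ∣ m → m ∈ S → d ∈ S)
    (map_mul : ∀ a b : ℕ, a * b ∈ S → f (a * b) = f a * f b) {m : ℕ} (hm : m ∈ S) :
    primeExtension f m = f m := by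
  induction m using induction_on_primes with
  | zero => exact absurd hm zero_notMem
  | one => rw [primeExtension_one, left_eq_mul.mp (map_mul 1 1 hm)]
  | prime_mul q a hq ih =>
    have ha : a ∈ S := mem_of_dvd (dvd_mul_left a q) hm
    rw [primeExtension_mul f hq.ne_zero (ne_of_mem_of_not_mem ha zero_notMem),
      primeExtension_prime f hq, ih ha, map_mul q a hm]

end PrimeExtension

/-- `g` restricts to a partial `G`-isomorphism `{1, …, n} → G`; its values outside `{1, …, n}` are
irrelevant. -/
structure IsPartialIsomorphism {G : Type*} [CommGroup G] (n : ℕ) (g : ℕ → G) : Prop where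
  bijOn : Set.BijOn g (Set.Icc 1 n) Set.univ
  map_mul : ∀ i j : ℕ, i ∈ Set.Icc 1 n → j ∈ Set.Icc 1 n → i * j ∈ Set.Icc 1 n →
    g (i * j) = g i * g j

/-- `c` restricts to an `n`-satisfactory coloring of the `n`-core; its values outside the `n`-core
are irrelevant. -/
structure IsSatisfactoryColoring_s17 (n : ℕ) (c : ℕ → ℕ) : Prop where
  mem_Icc : ∀ m ∈ Kcore n, c m ∈ Finset.Icc 1 n
  map_mul_ne : ∀ a ∈ Kcore n, ∀ i j : ℕ, 1 ≤ i → i < j → j ≤ n → c (i * a) ≠ c (j * a)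

namespace IsPartialIsomorphism

variable {G : Type*} [CommGroup G] {n : ℕ} {g : ℕ → G}

theorem primeExtension_eq (hg : IsPartialIsomorphism n g) {i : ℕ} (hi : i ∈ Set.Icc 1 n) :
    primeExtension g i = g i := by
  have mem_of_dvd : ∀ ⦃d m : ℕ⦄, d ∣ m → m ∈ Set.Icc 1 n → d ∈ Set.Icc 1 n :=
    fun d m hdm hm => ⟨Nat.pos_of_dvd_of_pos hdm hm.1, (Nat.le_of_dvd hm.1 hdm).trans hm.2⟩
  exact primeExtension_eq_of_map_mul (by simp) mem_of_dvd
    (fun a b hab => hg.map_mul a b (mem_of_dvd (dvd_mul_right a b) hab)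
      (mem_of_dvd (dvd_mul_left b a) hab) hab) hi

theorem injOn_primeExtension_mul (hg : IsPartialIsomorphism n g) {a : ℕ} (ha : a ≠ 0) :
    Set.InjOn (fun i => primeExtension g (i * a)) (Set.Icc 1 n) := by
  have extension_mul : ∀ i ∈ Set.Icc 1 n, primeExtension g (i * a) = g i * primeExtension g a :=
    fun i hi => by rw [primeExtension_mul g (Nat.ne_of_gt hi.1) ha, hg.primeExtension_eq hi]
  intro i hi j hj hij
  simp only [extension_mul i hi, extension_mul j hj, mul_left_inj] at hij
  exact hg.bijOn.injOn hi hj hij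

theorem isSatisfactoryColoring (hg : IsPartialIsomorphism n g) :
    IsSatisfactoryColoring_s17 n (Function.invFunOn g (Set.Icc 1 n) ∘ primeExtension g) where
  mem_Icc m _ := Finset.mem_Icc.mpr (hg.bijOn.surjOn.mapsTo_invFunOn (Set.mem_univ _))
  map_mul_ne a ha i j hi hij hj hc := by
    have extension_eq : primeExtension g (i * a) = primeExtension g (j * a) :=
      hg.bijOn.surjOn.rightInvOn_invFunOn.injOn (Set.mem_univ _) (Set.mem_univ _) hc
    exact hij.ne (hg.injOn_primeExtension_mul ha.1.ne' ⟨hi, hij.le.trans hj⟩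
      ⟨hi.trans hij.le, hj⟩ extension_eq)

end IsPartialIsomorphism

section UnitsModSq

variable {p : ℕ}

/-- The residue class of `m` modulo `p ^ 2` if `m` is coprime to `p`, and `-1` otherwise. Only its
values at the primes enter the construction: `q ↦ q` for `q ≠ p`, and `p ↦ -1`. -/
def unitOrNegOne (p m : ℕ) : (ZMod (p ^ 2))ˣ :=
  if h : m.Coprime p then ZMod.unitOfCoprime m (h.pow_right 2) else -1

theorem val_unitOrNegOne {m : ℕ} (hm : m.Coprime p) :
    (unitOrNegOne p m).val = m := by
  rw [unitOrNegOne, dif_pos hm, ZMod.coe_unitOfCoprime]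

theorem unitOrNegOne_self (hp : p ≠ 1) : unitOrNegOne p p = -1 :=
  dif_neg (by rwa [Nat.coprime_self])

theorem val_primeExtension_unitOrNegOne (hp : p ≠ 1) {m : ℕ} (hm : m.Coprime p) :
    (primeExtension (unitOrNegOne p) m).val = m := by
  have map_mul : ∀ a b : ℕ, (a * b).Coprime p →
      unitOrNegOne p (a * b) = unitOrNegOne p a * unitOrNegOne p b := fun a b hab => by
    ext
    rw [Units.val_mul, val_unitOrNegOne hab, val_unitOrNegOne hab.coprime_mul_right,
      val_unitOrNegOne hab.coprime_mul_left, Nat.cast_mul]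
  rw [primeExtension_eq_of_map_mul (S := {m | m.Coprime p}) (by simpa using hp)
    (fun _ _ hdm => Nat.Coprime.coprime_dvd_left hdm) map_mul hm, val_unitOrNegOne hm]

theorem val_primeExtension_unitOrNegOne_prime_mul (hp : p.Prime) {k : ℕ} (hk : k.Coprime p) :
    (primeExtension (unitOrNegOne p) (p * k)).val = -k := by
  have k_ne_zero : k ≠ 0 := by
    rintro rfl
    exact hp.ne_one (Nat.coprime_zero_left p |>.mp hk)
  rw [primeExtension_mul _ hp.ne_zero k_ne_zero, primeExtension_prime _ hp,
    unitOrNegOne_self hp.ne_one, Units.val_mul, val_primeExtension_unitOrNegOne hp.ne_one hk,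
    Units.val_neg, Units.val_one, neg_one_mul]

theorem surjOn_primeExtension_unitOrNegOne (hp : p.Prime) :
    Set.SurjOn (primeExtension (unitOrNegOne p)) (Set.Icc 1 (p ^ 2 - p)) Set.univ := by
  intro x _
  have : NeZero (p ^ 2) := ⟨pow_ne_zero 2 hp.ne_zero⟩
  obtain ⟨r, hr_lt, hr_coprime, hr_cast⟩ :
      ∃ r < p ^ 2, r.Coprime p ∧ (r : ZMod (p ^ 2)) = x :=
    ⟨(x : ZMod (p ^ 2)).val, ZMod.val_lt _,
      (ZMod.val_coe_unit_coprime x).coprime_dvd_right (dvd_pow_self p two_ne_zero),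
      ZMod.natCast_zmod_val _⟩
  rcases le_or_gt r (p ^ 2 - p) with hr_le | hr_gt
  · have r_pos : 0 < r := Nat.pos_of_ne_zero fun h =>
      hp.ne_one (by simpa [h] using hr_coprime)
    refine ⟨r, ⟨r_pos, hr_le⟩, Units.ext ?_⟩
    rw [val_primeExtension_unitOrNegOne hp.ne_one hr_coprime, hr_cast]
  · obtain ⟨k, hk⟩ := Nat.exists_eq_add_of_le hr_lt.le
    have k_pos : 0 < k := by omega
    have k_lt : k < p := by omega
    have k_coprime : k.Coprime p := (Nat.coprime_of_lt_prime k_pos.ne' k_lt hp).symm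
    have mul_le : p * k ≤ p ^ 2 - p := calc
      p * k ≤ p * (p - 1) := Nat.mul_le_mul_left p (Nat.le_pred_of_lt k_lt)
      _ = p ^ 2 - p := by rw [Nat.mul_sub_one, sq]
    have cast_add : (r + k : ZMod (p ^ 2)) = 0 := by
      rw [← Nat.cast_add, ← hk, ZMod.natCast_self]
    refine ⟨p * k, ⟨Nat.mul_pos hp.pos k_pos, mul_le⟩, Units.ext ?_⟩
    rw [val_primeExtension_unitOrNegOne_prime_mul hp k_coprime, ← hr_cast,
      eq_neg_of_add_eq_zero_left cast_add]

theorem card_units_zmod_prime_sq (hp : p.Prime) : Nat.card (ZMod (p ^ 2))ˣ = p ^ 2 - p := by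
  have : NeZero (p ^ 2) := ⟨pow_ne_zero 2 hp.ne_zero⟩
  rw [Nat.card_eq_fintype_card, ZMod.card_units_eq_totient, Nat.totient_prime_pow_succ hp 1,
    pow_one, Nat.mul_sub_one, sq]

theorem isPartialIsomorphism_primeExtension_unitOrNegOne (hp : p.Prime) :
    IsPartialIsomorphism (p ^ 2 - p) (primeExtension (unitOrNegOne p)) where
  bijOn := by
    have surjOn := surjOn_primeExtension_unitOrNegOne hp
    refine ⟨Set.mapsTo_univ _ _, ?_, surjOn⟩
    have card_image : (primeExtension (unitOrNegOne p) '' Set.Icc 1 (p ^ 2 - p)).ncard =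
        (Set.Icc 1 (p ^ 2 - p)).ncard := by
      rw [Set.univ_subset_iff.mp surjOn, Set.ncard_univ, card_units_zmod_prime_sq hp,
        Set.ncard_eq_toFinset_card', Set.toFinset_Icc, Nat.card_Icc, Nat.add_sub_cancel]
    exact Set.injOn_of_ncard_image_eq card_image
  map_mul _ _ hi hj _ := primeExtension_mul _ (Nat.ne_of_gt hi.1) (Nat.ne_of_gt hj.1)

end UnitsModSq

/-- For any prime `p`, setting `n = p² - p` and `G = (ℤ/p²ℤ)ˣ`, there is a partial
`G`-isomorphism `g : {1,…,n} → G` (a bijection with `g(ij) = g i * g j` whenever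
`i`, `j`, `ij ∈ {1,…,n}`); consequently there is an `n`-satisfactory coloring of
`K_n`. -/
theorem coloring_of_p_sq_minus_p (p : ℕ) (hp : p.Prime) :
    (∃ g : ℕ → (ZMod (p ^ 2))ˣ,
      Set.InjOn g (Set.Icc 1 (p ^ 2 - p)) ∧
      Set.SurjOn g (Set.Icc 1 (p ^ 2 - p)) Set.univ ∧
      (∀ i j : ℕ, i ∈ Set.Icc 1 (p ^ 2 - p) → j ∈ Set.Icc 1 (p ^ 2 - p) →
        i * j ∈ Set.Icc 1 (p ^ 2 - p) → g (i * j) = g i * g j)) ∧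
    (∃ c : ℕ → ℕ,
      (∀ m ∈ Kcore (p ^ 2 - p), c m ∈ Finset.Icc 1 (p ^ 2 - p)) ∧
      (∀ a ∈ Kcore (p ^ 2 - p), ∀ i j : ℕ, 1 ≤ i → i < j → j ≤ p ^ 2 - p →
        c (i * a) ≠ c (j * a))) := by
  have hg := isPartialIsomorphism_primeExtension_unitOrNegOne hp
  have hc := hg.isSatisfactoryColoring
  exact ⟨⟨_, hg.bijOn.injOn, hg.bijOn.surjOn, hg.map_mul⟩, ⟨_, hc.mem_Icc, hc.map_mul_ne⟩⟩
end

section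
/- The set of 6-satisfactory colorings of K_6 — functions c : K_6 → {1,…,6} with c(i) = i for all i ∈ {1,…,6} such that for every a ∈ K_6 and all integers i, j with 1 ≤ i < j ≤ 6, c(ia) ≠ c(ja) — has the cardinality of the continuum, 2^{ℵ₀}. In particular, since there are only finitely many multiplicative 6-satisfactory colorings of K_6, there exist nonmultiplicative 6-satisfactory colorings. -/
/-- `c : K_n → {1,…,n}` is an `n`-satisfactory coloring of `K_n`, normalized by
`c i = i` for `i ∈ {1,…,n}`. -/
def IsSatisfactoryOnCore (n : ℕ) (c : ↥(Kcore n) → ℕ) : Prop :=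
  (∀ x : ↥(Kcore n), (x : ℕ) ≤ n → c x = (x : ℕ)) ∧
  (∀ x : ↥(Kcore n), c x ∈ Finset.Icc 1 n) ∧
  (∀ a : ↥(Kcore n), ∀ i j : ℕ, 1 ≤ i → i < j → j ≤ n →
    ∀ x y : ↥(Kcore n), (x : ℕ) = i * (a : ℕ) → (y : ℕ) = j * (a : ℕ) →
      c x ≠ c y)

/-!
The map `2 ^ α * 3 ^ β * 5 ^ γ ↦ (α + 2 * γ mod 3, β + γ)`, called (phase, level) below, sends the
six numbers `a, 2 * a, …, 6 * a` to all three phases on each of two consecutive levels. Hence a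
coloring is satisfactory as soon as it is a bijection from phases to `{1, 2, 4}` on every even level
and to `{3, 5, 6}` on every odd one. The normalization fixes the bijections on levels `0` and `1`;
those on the remaining levels can be chosen independently, in `6 ^ ℵ₀ = 2 ^ ℵ₀` ways.
-/

open Cardinal

universe u

theorem mk_arrow_le_continuum (α β : Type u) [Countable α] [Countable β] : #(α → β) ≤ 𝔠 := by
  rw [← power_def, ← aleph0_power_aleph0]
  exact (power_le_power_right mk_le_aleph0).trans
    (power_le_power_left aleph0_ne_zero mk_le_aleph0)

namespace Kcore

variable {n : ℕ}

theorem mul_mem {a b : ℕ} (ha : a ∈ Kcore n) (hb : b ∈ Kcore n) : a * b ∈ Kcore n :=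
  ⟨Nat.mul_pos ha.1 hb.1, fun p hp hpab ↦ (hp.dvd_mul.1 hpab).elim (ha.2 p hp) (hb.2 p hp)⟩

theorem pow_mem {a : ℕ} (ha : 0 < a) (han : a ≤ n) (e : ℕ) : a ^ e ∈ Kcore n :=
  ⟨pow_pos ha e, fun _ hp hpa ↦ (Nat.le_of_dvd ha (hp.dvd_of_dvd_pow hpa)).trans han⟩

theorem two_pow_mul_three_pow_mem (hn : 3 ≤ n) (a b : ℕ) : 2 ^ a * 3 ^ b ∈ Kcore n :=
  mul_mem (pow_mem two_pos ((Nat.le_succ 2).trans hn) a) (pow_mem three_pos hn b)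

/-- The position of `2 ^ α * 3 ^ β * 5 ^ γ` within its level, namely `α + 2 * γ` modulo `3`.
Colorings are obtained by permuting phases level by level. -/
def phase (m : ℕ) : ZMod 3 := m.factorization 2 + 2 * m.factorization 5

/-- The level `β + γ` of `2 ^ α * 3 ^ β * 5 ^ γ`. Numbers on different levels can be recolored
independently as long as the parity of the level is respected. -/
def level (m : ℕ) : ℕ := m.factorization 3 + m.factorization 5

theorem phase_mul {a b : ℕ} (ha : a ≠ 0) (hb : b ≠ 0) : phase (a * b) = phase a + phase b := by
  simp only [phase, Nat.factorization_mul ha hb, Finsupp.add_apply, Nat.cast_add]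
  ring

theorem level_mul {a b : ℕ} (ha : a ≠ 0) (hb : b ≠ 0) : level (a * b) = level a + level b := by
  simp only [level, Nat.factorization_mul ha hb, Finsupp.add_apply]
  ring

theorem phase_two_pow_mul_three_pow (a b : ℕ) : phase (2 ^ a * 3 ^ b) = a := by
  simp [phase, Nat.factorization_mul, Nat.prime_two.factorization, Nat.prime_three.factorization]

theorem level_two_pow_mul_three_pow (a b : ℕ) : level (2 ^ a * 3 ^ b) = b := by
  simp [level, Nat.factorization_mul, Nat.prime_two.factorization, Nat.prime_three.factorization]

theorem phase_five : phase 5 = 2 := by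
  simp [phase, Nat.prime_five.factorization]

theorem level_five : level 5 = 1 := by
  simp [level, Nat.prime_five.factorization]

theorem level_le_one {i : ℕ} (hi : i ∈ Finset.Icc 1 6) : level i ≤ 1 := by
  have hlevel := fun a b ↦ (level_two_pow_mul_three_pow a b).le
  obtain ⟨h1, h6⟩ := Finset.mem_Icc.1 hi
  interval_cases i
  exacts [(hlevel 0 0).trans zero_le_one, (hlevel 1 0).trans zero_le_one, hlevel 0 1,
    (hlevel 2 0).trans zero_le_one, level_five.le, hlevel 1 1]

/-- The element of `{1, …, 6}` with a given phase and parity of the level. -/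
def color (r : ZMod 3) (p : ZMod 2) : ℕ :=
  (![![1, 3], ![2, 6], ![4, 5]] : Fin 3 → Fin 2 → ℕ) r p

theorem color_mem_Icc : ∀ r p, color r p ∈ Finset.Icc 1 6 := by
  decide

theorem color_inj : ∀ {r r' p p'}, color r p = color r' p' ↔ r = r' ∧ p = p' := by
  decide

theorem color_phase_level {i : ℕ} (hi : i ∈ Finset.Icc 1 6) : color (phase i) (level i) = i := by
  have hcolor (a b : ℕ) : color (phase (2 ^ a * 3 ^ b)) (level (2 ^ a * 3 ^ b)) = color a b := by
    rw [phase_two_pow_mul_three_pow, level_two_pow_mul_three_pow]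
  obtain ⟨h1, h6⟩ := Finset.mem_Icc.1 hi
  interval_cases i
  exacts [hcolor 0 0, hcolor 1 0, hcolor 0 1, hcolor 2 0, by rw [phase_five, level_five]; rfl,
    hcolor 1 1]

/-- The coloring in which the phases on level `k` are permuted by `τ k` before being turned into
colors. -/
def levelColoring (τ : ℕ → Equiv.Perm (ZMod 3)) (m : ℕ) : ℕ :=
  color (τ (level m) (phase m)) (level m)

variable {τ : ℕ → Equiv.Perm (ZMod 3)}

theorem levelColoring_two_pow_mul_three_pow (a b : ℕ) :
    levelColoring τ (2 ^ a * 3 ^ b) = color (τ b a) b := by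
  rw [levelColoring, phase_two_pow_mul_three_pow, level_two_pow_mul_three_pow]

theorem levelColoring_eq_self {i : ℕ} (h0 : τ 0 = 1) (h1 : τ 1 = 1) (hi : i ∈ Finset.Icc 1 6) :
    levelColoring τ i = i := by
  have hτ : τ (level i) = 1 := by
    rcases Nat.le_one_iff_eq_zero_or_eq_one.1 (level_le_one hi) with h | h <;> rwa [h]
  rw [levelColoring, hτ, Equiv.Perm.one_apply, color_phase_level hi]

theorem injOn_levelColoring_mul {a : ℕ} (ha : a ≠ 0) :
    Set.InjOn (fun i ↦ levelColoring τ (i * a)) (Finset.Icc 1 6) := by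
  intro i hi j hj hij
  have hi0 : i ≠ 0 := Nat.one_le_iff_ne_zero.1 (Finset.mem_Icc.1 hi).1
  have hj0 : j ≠ 0 := Nat.one_le_iff_ne_zero.1 (Finset.mem_Icc.1 hj).1
  simp only [levelColoring, phase_mul, level_mul, ne_eq, hi0, hj0, ha, not_false_eq_true,
    color_inj, Nat.cast_add, add_left_inj] at hij
  obtain ⟨hphase, hparity⟩ := hij
  have hlevel : level i = level j :=
    ((ZMod.natCast_eq_natCast_iff _ _ _).1 hparity).eq_of_lt_of_lt
      (Nat.lt_succ_of_le (level_le_one hi)) (Nat.lt_succ_of_le (level_le_one hj))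
  rw [hlevel, (τ _).apply_eq_iff_eq, add_left_inj] at hphase
  rw [← color_phase_level hi, ← color_phase_level hj, hphase, hlevel]

theorem isSatisfactoryOnCore_levelColoring (h0 : τ 0 = 1) (h1 : τ 1 = 1) :
    IsSatisfactoryOnCore 6 fun x ↦ levelColoring τ x := by
  refine ⟨fun x hx ↦ levelColoring_eq_self h0 h1 (Finset.mem_Icc.2 ⟨x.2.1, hx⟩),
    fun x ↦ color_mem_Icc _ _, ?_⟩
  intro a i j hi hij hj x y hx hy hxy
  simp only [hx, hy] at hxy
  exact hij.ne (injOn_levelColoring_mul a.2.1.ne' (Finset.mem_Icc.2 ⟨hi, hij.le.trans hj⟩)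
    (Finset.mem_Icc.2 ⟨hi.trans hij.le, hj⟩) hxy)

theorem levelColoring_injective :
    Function.Injective fun (τ : ℕ → Equiv.Perm (ZMod 3)) (x : Kcore 6) ↦ levelColoring τ x := by
  intro τ τ' h
  ext k r : 2
  have hr := congrFun h ⟨_, two_pow_mul_three_pow_mem (by norm_num) r.val k⟩
  simpa only [levelColoring_two_pow_mul_three_pow, color_inj, and_true, ZMod.natCast_zmod_val]
    using hr

/-- The numbers `1` and `3 ^ k` have the same color, but their products with `2 ^ r` do not. -/
theorem not_multiplicative_levelColoring {k : ℕ} {r : ZMod 3} (hk : Even k)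
    (h0 : τ k 0 = τ 0 0) (hr : τ k r ≠ τ 0 r) :
    ¬ ∃ op : ℕ → ℕ → ℕ, ∀ a b x : Kcore 6, (x : ℕ) = a * b →
      levelColoring τ x = op (levelColoring τ a) (levelColoring τ b) := by
  rintro ⟨op, hop⟩
  have mem := two_pow_mul_three_pow_mem (n := 6) (by norm_num)
  have hproduct (l : ℕ) : color (τ l r) l = op (color (τ 0 r) 0) (color (τ l 0) l) := by
    have h := hop ⟨_, mem r.val 0⟩ ⟨_, mem 0 l⟩ ⟨_, mem r.val l⟩ (by simp)
    simpa only [levelColoring_two_pow_mul_three_pow, ZMod.natCast_zmod_val, Nat.cast_zero] using h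
  have hk0 : (k : ZMod 2) = (0 : ℕ) := by rw [Nat.cast_zero, ZMod.natCast_eq_zero_iff_even.2 hk]
  have hsame : color (τ k r) k = color (τ 0 r) (0 : ℕ) := by
    rw [hproduct k, hproduct 0, h0, hk0]
  exact hr (color_inj.1 hsame).1

/-- The sequence `1, 1, σ 0, σ 1, …`, whose first two terms are those forced by the
normalization `c i = i`. -/
def prependOnes (σ : ℕ → Equiv.Perm (ZMod 3)) : ℕ → Equiv.Perm (ZMod 3)
  | 0 | 1 => 1
  | k + 2 => σ k

theorem prependOnes_injective : Function.Injective prependOnes :=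
  fun _ _ h ↦ funext fun k ↦ congrFun h (k + 2)

theorem isSatisfactoryOnCore_prependOnes (σ : ℕ → Equiv.Perm (ZMod 3)) :
    IsSatisfactoryOnCore 6 fun x ↦ levelColoring (prependOnes σ) x :=
  isSatisfactoryOnCore_levelColoring rfl rfl

theorem continuum_le_mk_isSatisfactoryOnCore :
    𝔠 ≤ #{c : Kcore 6 → ℕ // IsSatisfactoryOnCore 6 c} := by
  have hcard : #(ℕ → Equiv.Perm (ZMod 3)) = 𝔠 := by
    rw [← power_def, mk_nat, mk_fintype]
    exact nat_power_aleph0 (by decide)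
  rw [← hcard]
  exact mk_le_of_injective (f := fun σ ↦ ⟨_, isSatisfactoryOnCore_prependOnes σ⟩) fun σ σ' h ↦
    prependOnes_injective (levelColoring_injective (congrArg Subtype.val h))

end Kcore

/-- The set of 6-satisfactory colorings of `K_6` has the cardinality of the
continuum; in particular there exist nonmultiplicative 6-satisfactory colorings. -/
theorem continuum_many_six_colorings :
    Cardinal.mk {c : ↥(Kcore 6) → ℕ // IsSatisfactoryOnCore 6 c} =
      Cardinal.continuum ∧
    ∃ c : ↥(Kcore 6) → ℕ, IsSatisfactoryOnCore 6 c ∧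
      ¬ (∃ op : ℕ → ℕ → ℕ, IsCommGroupOpOn 6 op ∧
        ∀ a b x : ↥(Kcore 6), (x : ℕ) = (a : ℕ) * (b : ℕ) →
          c x = op (c a) (c b)) := by
  refine ⟨le_antisymm ?_ Kcore.continuum_le_mk_isSatisfactoryOnCore, ?_⟩
  · exact (mk_subtype_le _).trans (mk_arrow_le_continuum _ _)
  · refine ⟨_, Kcore.isSatisfactoryOnCore_prependOnes fun _ ↦ Equiv.neg _, ?_⟩
    rintro ⟨op, -, hop⟩
    exact Kcore.not_multiplicative_levelColoring (k := 2) (r := 1) even_two rfl (by decide)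
      ⟨op, hop⟩
end
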